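/- arXiv:1109.5135 — 2 statements merged into one kernel-verified Lean document; each statement's English description precedes it below -/
import Mathlib

section
/- Let H be a fixed simple graph on k ≥ 3 vertices with m ≥ 1 edges. There is a constant c > 0 depending only on H such that for every n ≥ 1 there exists a learning graph for the subgraph-detection function f_{H,n} whose complexity is at most c · n^{2 - 2/(k+1) - k/((k+1)(m+1))}. -/
/-!
Learning graphs (Belovs) and the subgraph-detection function.
-/

/-- A learning graph for a function `f` with domain `D ⊆ {0,1}^ι`. -/
structure LearningGraph {ι : Type} [Fintype ι] [DecidableEq ι]
    (D : Set (ι → Bool)) (f : (ι → Bool) → Bool) where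
  /-- the vertex set -/
  V : Type
  [fintypeV : Fintype V]
  [decEqV : DecidableEq V]
  /-- the root -/
  root : V
  /-- the directed edge set -/
  E : Finset (V × V)
  /-- a topological ranking witnessing acyclicity -/
  rank : V → ℕ
  acyclic : ∀ e ∈ E, rank e.1 < rank e.2
  /-- the loaded variable indices at each vertex -/
  S : V → Finset ι
  S_root : S root = ∅
  S_mono : ∀ e ∈ E, S e.1 ⊆ S e.2
  /-- the weight function (only its values on `E` matter) -/
  w : V × V → ℝ
  w_pos : ∀ e ∈ E, 0 < w e
  /-- the flows, one for each 1-input of `f` -/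
  p : (ι → Bool) → V × V → ℝ
  /-- the net flow out of the root is 1 -/
  flow_root : ∀ y ∈ D, f y = true →
    ((∑ e ∈ E, if e.1 = root then p y e else 0)
      - ∑ e ∈ E, if e.2 = root then p y e else 0) = 1
  /-- at every non-root vertex, either the flow is conserved, or the vertex is a sink
  (strictly positive net incoming flow) and then its label is a 1-certificate for `y` -/
  flow_cons : ∀ y ∈ D, f y = true → ∀ v : V, v ≠ root →
    ((∑ e ∈ E, if e.2 = v then p y e else 0)
        - ∑ e ∈ E, if e.1 = v then p y e else 0) = 0 ∨
      (0 < ((∑ e ∈ E, if e.2 = v then p y e else 0)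
        - ∑ e ∈ E, if e.1 = v then p y e else 0) ∧
        ∀ z ∈ D, (∀ i ∈ S v, z i = y i) → f z = true)

attribute [instance] LearningGraph.fintypeV LearningGraph.decEqV

namespace LearningGraph

variable {ι : Type} [Fintype ι] [DecidableEq ι] {D : Set (ι → Bool)}
  {f : (ι → Bool) → Bool}

/-- The length of a learning graph edge. -/
def len (G : LearningGraph D f) (e : G.V × G.V) : ℕ :=
  (G.S e.2 \ G.S e.1).card

/-- The negative complexity `C₀`. -/
noncomputable def C0 (G : LearningGraph D f) : ℝ :=
  ∑ e ∈ G.E, (G.len e : ℝ) * G.w e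

/-- The positive complexity `C₁`: the maximum over 1-inputs `y`. -/
noncomputable def C1 (G : LearningGraph D f) : ℝ :=
  ⨆ y : {y : ι → Bool // y ∈ D ∧ f y = true},
    ∑ e ∈ G.E, (G.len e : ℝ) * (G.p y.1 e) ^ 2 / G.w e

/-- The complexity of a learning graph. -/
noncomputable def complexity (G : LearningGraph D f) : ℝ :=
  Real.sqrt (G.C0 * G.C1)

end LearningGraph

/-- The edge slots of an `n`-vertex graph: the `C(n,2)` unordered pairs,
represented by ordered pairs with increasing entries. -/
abbrev EdgeSlot (n : ℕ) := {q : Fin n × Fin n // q.1 < q.2}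

/-- `x : EdgeSlot n → Bool` contains a copy of `H` as a (not necessarily induced) subgraph. -/
def HasHCopy {k n : ℕ} (H : SimpleGraph (Fin k)) (x : EdgeSlot n → Bool) : Prop :=
  ∃ φ : Fin k ↪ Fin n, ∀ i j : Fin k, H.Adj i j →
    ∀ q : EdgeSlot n,
      ((q.1.1 = φ i ∧ q.1.2 = φ j) ∨ (q.1.1 = φ j ∧ q.1.2 = φ i)) → x q = true

open Classical in
/-- The subgraph-detection function `f_{H,n}`. -/
noncomputable def subgraphFn {k : ℕ} (H : SimpleGraph (Fin k)) (n : ℕ) :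
    (EdgeSlot n → Bool) → Bool :=
  fun x => if HasHCopy H x then true else false

/-!
Switch on random bits, a bit `(i, a)` with probability `ρ` for each vertex `i` of `H` and each
`a ≤ n`, and a bit `(e, a, c)` with probability `s` for each edge `e` of `H` and all `a, c ≤ n`;
query the pair `{a, c}` when some `e = {i, j}` has all of `(i, a)`, `(j, c)`, `(e, a, c)` on.
Write `w(X)` for the probability that exactly the bits of `X` are on and `ℙ(Z)` for the probability
that all bits of `Z` are. The learning graph has the sets of bits as vertices, entered from the root
with weight `w(X)`, and edges `X → X ∪ {b}` of weight `w(X) ℙ({b})`. Its negative complexity is at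
most of the order of the expected number of queries, `n²ρ²s`.

Given a copy of `H`, the flow starts from a random `X` without the `k + m` bits of the copy and
then switches these bits on, vertices first. When the bits of `Z` are on already, switching on `b`
uses an edge of weight `w(X ∪ Z) ℙ({b}) ≥ w(X) ℙ(Z ∪ {b})`, so that this step costs the expected
number of queries caused by `b`, divided by `ℙ(Z ∪ {b})`. This is at most of the order of
`s(1 + nρ)/ρᵏ` for a vertex and `1/(ρᵏsᵐ)` for an edge, both of which match the negative complexity
when `nρᵏ⁺¹ = 1` and `nρsᵐ⁺¹ = 1`.
-/

open Finset

namespace LearningGraph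

variable {ι : Type} [Fintype ι] [DecidableEq ι] {D : Set (ι → Bool)} {f : (ι → Bool) → Bool}
  (G : LearningGraph D f)

lemma C0_nonneg : 0 ≤ G.C0 :=
  sum_nonneg fun e he => mul_nonneg (Nat.cast_nonneg _) (G.w_pos e he).le

lemma C1_nonneg : 0 ≤ G.C1 :=
  Real.iSup_nonneg fun _ => sum_nonneg fun e he =>
    div_nonneg (mul_nonneg (Nat.cast_nonneg _) (sq_nonneg _)) (G.w_pos e he).le

lemma complexity_le {K : ℝ} (h0 : G.C0 ≤ K) (h1 : G.C1 ≤ K) : G.complexity ≤ K := by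
  have hK : 0 ≤ K := G.C0_nonneg.trans h0
  calc G.complexity ≤ Real.sqrt (K * K) :=
        Real.sqrt_le_sqrt (mul_le_mul h0 h1 G.C1_nonneg hK)
    _ = K := Real.sqrt_mul_self hK

end LearningGraph

section BernoulliWeight

variable {B R : Type*} [Fintype B] [DecidableEq B]

section CommRing

variable [CommRing R] (q : B → R)

/-- The probability that the random subset of `B` containing each `b` independently with
probability `q b` equals `X`. -/
def bernoulliWeight (X : Finset B) : R :=
  (∏ b ∈ X, q b) * ∏ b ∈ Xᶜ, (1 - q b)

lemma bernoulliWeight_compl (X : Finset B) :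
    bernoulliWeight q Xᶜ = bernoulliWeight (fun b => 1 - q b) X := by
  simp [bernoulliWeight, mul_comm]

lemma sum_bernoulliWeight_powerset_compl (Z : Finset B) :
    ∑ X ∈ Zᶜ.powerset, bernoulliWeight q X = ∏ b ∈ Z, (1 - q b) := by
  have factor_out : ∀ X ∈ Zᶜ.powerset, bernoulliWeight q X =
      (∏ b ∈ Z, (1 - q b)) * ((∏ b ∈ X, q b) * ∏ b ∈ Zᶜ \ X, (1 - q b)) := by
    intro X hX
    have hZX : Z ⊆ Xᶜ := subset_compl_comm.1 (mem_powerset.1 hX)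
    have hsdiff : Zᶜ \ X = Xᶜ \ Z := by ext; simp [and_comm]
    rw [bernoulliWeight, hsdiff, ← prod_sdiff hZX]
    ring
  rw [sum_congr rfl factor_out, ← mul_sum, ← prod_add]
  simp

lemma sum_bernoulliWeight_superset (Y : Finset B) :
    ∑ X with Y ⊆ X, bernoulliWeight q X = ∏ b ∈ Y, q b := by
  have h := sum_bernoulliWeight_powerset_compl (fun b => 1 - q b) Y
  simp only [sub_sub_cancel] at h
  rw [← h]
  refine sum_nbij' compl compl ?_ ?_ ?_ ?_ ?_ <;>
    simp [← bernoulliWeight_compl, subset_compl_comm]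

lemma sum_bernoulliWeight_mul_card_filter {τ : Type*} (s : Finset τ) (A : τ → Finset B) :
    ∑ X, bernoulliWeight q X * #{T ∈ s | A T ⊆ X} = ∑ T ∈ s, ∏ b ∈ A T, q b := by
  simp_rw [← sum_boole, mul_sum, ← sum_bernoulliWeight_superset q, sum_filter]
  rw [sum_comm]
  simp

variable {q}

lemma bernoulliWeight_union_mul {X Z : Finset B} (h : Disjoint X Z) :
    bernoulliWeight q (X ∪ Z) * ∏ b ∈ Z, (1 - q b) = bernoulliWeight q X * ∏ b ∈ Z, q b := by
  have hZX : Z ⊆ Xᶜ := subset_compl_comm.1 (subset_compl_iff_disjoint_right.2 h)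
  have hcompl : (X ∪ Z)ᶜ = Xᶜ \ Z := by ext; simp
  rw [bernoulliWeight, bernoulliWeight, hcompl, prod_union h, ← prod_sdiff hZX]
  ring

end CommRing

variable [CommRing R] [LinearOrder R] [IsStrictOrderedRing R] {q : B → R}

lemma bernoulliWeight_pos (h0 : ∀ b, 0 < q b) (h1 : ∀ b, q b < 1) (X : Finset B) :
    0 < bernoulliWeight q X :=
  mul_pos (prod_pos fun b _ => h0 b) (prod_pos fun b _ => sub_pos.2 (h1 b))

lemma bernoulliWeight_mul_prod_le_union (h0 : ∀ b, 0 < q b) (h1 : ∀ b, q b < 1)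
    {X Z : Finset B} (h : Disjoint X Z) :
    bernoulliWeight q X * ∏ b ∈ Z, q b ≤ bernoulliWeight q (X ∪ Z) := by
  rw [← bernoulliWeight_union_mul h]
  exact mul_le_of_le_one_right (bernoulliWeight_pos h0 h1 _).le
    (prod_le_one (fun b _ => (sub_pos.2 (h1 b)).le) fun b _ => sub_le_self _ (h0 b).le)

end BernoulliWeight

section InitSeg

variable {B : Type*} {L : ℕ} (b : Fin L ↪ B)

/-- The set of the first `t` terms of the sequence `b`. -/
def initSeg (t : ℕ) : Finset B :=
  ({i : Fin L | i.val < t} : Finset (Fin L)).map b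

lemma initSeg_zero : initSeg b 0 = ∅ := by
  simp [initSeg]

lemma initSeg_length : initSeg b L = univ.map b := by
  simp [initSeg]

lemma initSeg_subset (t : ℕ) : initSeg b t ⊆ univ.map b :=
  map_subset_map.2 (subset_univ _)

lemma notMem_initSeg (t : Fin L) : b t ∉ initSeg b t := by
  simp [initSeg]

variable [DecidableEq B]

lemma initSeg_succ (t : Fin L) : initSeg b (t + 1) = insert (b t) (initSeg b t) := by
  rw [initSeg, initSeg, ← map_insert]
  congr 1
  ext i
  simp [le_iff_eq_or_lt, Fin.ext_iff]

variable {b}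

lemma notMem_union_initSeg {X : Finset B} (hX : Disjoint X (univ.map b)) (t : Fin L) :
    b t ∉ X ∪ initSeg b t := by
  simp only [mem_union, notMem_initSeg, or_false]
  exact fun h => disjoint_left.1 hX h (mem_map_of_mem b (mem_univ t))

lemma union_initSeg_succ (X : Finset B) (t : Fin L) :
    X ∪ initSeg b (t + 1) = insert (b t) (X ∪ initSeg b t) := by
  rw [initSeg_succ, union_insert]

lemma union_initSeg_sdiff {X : Finset B} (hX : Disjoint X (univ.map b)) (t : ℕ) :
    (X ∪ initSeg b t) \ univ.map b = X := by
  rw [union_sdiff_distrib, sdiff_eq_self_of_disjoint hX, sdiff_eq_empty_iff_subset.2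
    (initSeg_subset b t), union_empty]

end InitSeg

/-- Random loading of input variables: every bit `b : B` is switched on independently with
probability `prob b`, and rule `T : τ` loads `slot T` once all bits of `trigger T` are on.
A rule loads at most one variable, so that costs can be measured by counting rules. -/
structure LoadingScheme (ι B τ : Type*) where
  prob : B → ℝ
  prob_pos : ∀ b, 0 < prob b
  prob_le_half : ∀ b, prob b ≤ 1 / 2
  trigger : τ → Finset B
  slot : τ → Finset ι
  card_slot_le_one : ∀ T, #(slot T) ≤ 1

namespace LoadingScheme

section Probability

variable {ι B τ : Type*} (R : LoadingScheme ι B τ)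

lemma prob_lt_one (b : B) : R.prob b < 1 := by
  linarith [R.prob_le_half b]

lemma prod_one_sub_prob_pos (Z : Finset B) : 0 < ∏ c ∈ Z, (1 - R.prob c) :=
  prod_pos fun c _ => sub_pos.2 (R.prob_lt_one c)

/-- The probability that all bits of `X` are on. -/
def probOn (X : Finset B) : ℝ := ∏ b ∈ X, R.prob b

lemma probOn_pos (X : Finset B) : 0 < R.probOn X :=
  prod_pos fun b _ => R.prob_pos b

lemma probOn_le_one (X : Finset B) : R.probOn X ≤ 1 :=
  prod_le_one (fun b _ => (R.prob_pos b).le) fun b _ => (R.prob_lt_one b).le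

lemma probOn_anti {X Y : Finset B} (h : X ⊆ Y) : R.probOn Y ≤ R.probOn X :=
  prod_le_prod_of_subset_of_le_one h (fun b _ => (R.prob_pos b).le)
    fun b _ _ => (R.prob_lt_one b).le

variable [DecidableEq B]

lemma probOn_insert {X : Finset B} {b : B} (hb : b ∉ X) :
    R.probOn (insert b X) = R.prob b * R.probOn X :=
  prod_insert hb

/-- The cost of switching on the bit `b` when the bits of `Z ∋ b` are forced on, up to a constant:
the expected number of rules completed by `b`, divided by the probability of `Z`. -/
noncomputable def switchCost [Fintype τ] (Z : Finset B) (b : B) : ℝ :=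
  (R.probOn Z)⁻¹ * ∑ T with b ∈ R.trigger T, R.probOn (R.trigger T \ Z)

lemma switchCost_mono [Fintype τ] {Z W : Finset B} (h : Z ⊆ W) (b : B) :
    R.switchCost Z b ≤ R.switchCost W b :=
  mul_le_mul (inv_anti₀ (R.probOn_pos W) (R.probOn_anti h))
    (sum_le_sum fun _ _ => R.probOn_anti (sdiff_subset_sdiff subset_rfl h))
    (sum_nonneg fun _ _ => (R.probOn_pos _).le) (inv_nonneg.2 (R.probOn_pos W).le)

end Probability

section Loaded

variable {ι B τ : Type*} [DecidableEq ι] [DecidableEq B] [Fintype τ] (R : LoadingScheme ι B τ)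

/-- The variables loaded when `X` is the set of bits that are on. -/
def loaded (X : Finset B) : Finset ι :=
  ({T | R.trigger T ⊆ X} : Finset τ).biUnion R.slot

lemma slot_subset_loaded {T : τ} {X : Finset B} (h : R.trigger T ⊆ X) :
    R.slot T ⊆ R.loaded X :=
  subset_biUnion_of_mem R.slot (by simpa using h)

lemma loaded_mono {X Y : Finset B} (h : X ⊆ Y) : R.loaded X ⊆ R.loaded Y :=
  biUnion_subset_biUnion_of_subset_left _ (monotone_filter_right _ fun _ _ hT => hT.trans h)

lemma card_loaded_le (X : Finset B) : #(R.loaded X) ≤ #{T | R.trigger T ⊆ X} := by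
  simpa [loaded] using card_biUnion_le_card_mul _ R.slot 1 fun T _ => R.card_slot_le_one T

lemma card_loaded_insert_sdiff_le (b : B) (X : Finset B) :
    #(R.loaded (insert b X) \ R.loaded X) ≤
      #{T ∈ {T | b ∈ R.trigger T} | R.trigger T ⊆ insert b X} := by
  have hsub : R.loaded (insert b X) \ R.loaded X ⊆
      ({T ∈ {T | b ∈ R.trigger T} | R.trigger T ⊆ insert b X} : Finset τ).biUnion R.slot := by
    intro i hi
    simp only [loaded, mem_sdiff, mem_biUnion, mem_filter, mem_univ, true_and] at hi ⊢
    obtain ⟨⟨T, hT, hiT⟩, hnot⟩ := hi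
    refine ⟨T, ⟨?_, hT⟩, hiT⟩
    by_contra hb
    exact hnot ⟨T, (subset_insert_iff_of_notMem hb).1 hT, hiT⟩
  simpa using (card_le_card hsub).trans
    (card_biUnion_le_card_mul _ R.slot 1 fun T _ => R.card_slot_le_one T)

end Loaded

section Graph

variable {ι B τ : Type*} [DecidableEq B]

section Edges

variable [Fintype B]

variable (B) in
/-- The edges of the learning graph of a loading scheme on the vertices `Option (Finset B)`: the
root `none` leads to every set of bits, and every set of bits to those with one bit more. -/
def edges : Finset (Option (Finset B) × Option (Finset B)) :=
  univ.image (fun X => (none, some X)) ∪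
    (univ.sigma compl).image fun p : Σ _ : Finset B, B => (some p.1, some (insert p.2 p.1))

lemma root_edge_mem (X : Finset B) : (none, some X) ∈ edges B := by
  simp [edges]

lemma insert_edge_mem {X : Finset B} {b : B} (hb : b ∉ X) :
    (some X, some (insert b X)) ∈ edges B :=
  mem_union_right _ (mem_image.2 ⟨⟨X, b⟩, by simpa using hb, rfl⟩)

lemma forall_mem_edges {P : Option (Finset B) × Option (Finset B) → Prop} :
    (∀ e ∈ edges B, P e) ↔
      (∀ X, P (none, some X)) ∧ ∀ X, ∀ b ∉ X, P (some X, some (insert b X)) := by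
  refine ⟨fun h => ⟨fun X => h _ (root_edge_mem X), fun X b hb => h _ (insert_edge_mem hb)⟩, ?_⟩
  rintro ⟨hroot, hinsert⟩ e he
  simp only [edges, mem_union, mem_image, mem_sigma, mem_univ, true_and, mem_compl] at he
  obtain ⟨X, rfl⟩ | ⟨⟨X, b⟩, hb, rfl⟩ := he
  exacts [hroot X, hinsert X b hb]

lemma sum_edges (F : Option (Finset B) × Option (Finset B) → ℝ) :
    ∑ e ∈ edges B, F e =
      ∑ X, F (none, some X) + ∑ X, ∑ b ∈ Xᶜ, F (some X, some (insert b X)) := by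
  have hdisj : Disjoint (univ.image fun X : Finset B => (none, some X))
      ((univ.sigma compl).image fun p : Σ _ : Finset B, B =>
        ((some p.1, some (insert p.2 p.1)) : Option (Finset B) × Option (Finset B))) := by
    simp [disjoint_left]
  rw [edges, sum_union hdisj, sum_image fun X _ Y _ h => by simpa using h, sum_image,
    sum_sigma]
  rintro ⟨X, b⟩ hb ⟨Y, c⟩ - h
  simp only [Prod.mk.injEq, Option.some.injEq] at h
  obtain ⟨rfl, h⟩ := h
  simp only [coe_sigma, Set.mem_sigma_iff, mem_coe, mem_compl] at hb
  rw [(insert_inj hb.2).1 h]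

end Edges

section Weight

variable [Fintype B] (R : LoadingScheme ι B τ)

/-- The probability that `X` is the set of bits that are on. -/
def weight (X : Finset B) : ℝ := bernoulliWeight R.prob X

lemma weight_pos (X : Finset B) : 0 < R.weight X :=
  bernoulliWeight_pos R.prob_pos R.prob_lt_one X

lemma sum_weight_mul_card_filter (s : Finset τ) (A : τ → Finset B) :
    ∑ X, R.weight X * #{T ∈ s | A T ⊆ X} = ∑ T ∈ s, R.probOn (A T) :=
  sum_bernoulliWeight_mul_card_filter R.prob s A

lemma weight_mul_probOn_le {X Z : Finset B} (h : Disjoint X Z) :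
    R.weight X * R.probOn Z ≤ R.weight (X ∪ Z) :=
  bernoulliWeight_mul_prod_le_union R.prob_pos R.prob_lt_one h

/-- The weight of an edge is the probability of its source times that of the bits it switches on;
only the values on `edges B` matter. -/
def edgeWeight : Option (Finset B) × Option (Finset B) → ℝ
  | (some X, some Y) => R.weight X * R.probOn (Y \ X)
  | (none, some X) => R.weight X
  | (_, none) => 1

lemma edgeWeight_insert {X : Finset B} {b : B} (hb : b ∉ X) :
    R.edgeWeight (some X, some (insert b X)) = R.weight X * R.prob b := by
  simp [edgeWeight, probOn, insert_sdiff_of_notMem _ hb]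

lemma edgeWeight_pos (e : Option (Finset B) × Option (Finset B)) : 0 < R.edgeWeight e := by
  rcases e with ⟨_ | X, _ | Y⟩
  exacts [one_pos, R.weight_pos Y, one_pos, mul_pos (R.weight_pos X) (R.probOn_pos _)]

end Weight

section Length

variable [DecidableEq ι] [Fintype τ] (R : LoadingScheme ι B τ)

/-- The variables loaded at a vertex of the learning graph. -/
def label (v : Option (Finset B)) : Finset ι := v.elim ∅ R.loaded

/-- The number of variables loaded along an edge. -/
def edgeLength (e : Option (Finset B) × Option (Finset B)) : ℕ := #(R.label e.2 \ R.label e.1)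

lemma edgeLength_root_le (X : Finset B) :
    R.edgeLength (none, some X) ≤ #{T | R.trigger T ⊆ X} := by
  simpa [edgeLength, label] using R.card_loaded_le X

lemma edgeLength_insert_le (X : Finset B) (b : B) :
    R.edgeLength (some X, some (insert b X)) ≤
      #{T ∈ {T | b ∈ R.trigger T} | R.trigger T ⊆ insert b X} :=
  R.card_loaded_insert_sdiff_le b X

variable [Fintype B]

lemma sum_edgeLength_root_mul_edgeWeight_le :
    ∑ X : Finset B, R.edgeLength (none, some X) * R.edgeWeight (none, some X) ≤
      ∑ T, R.probOn (R.trigger T) := by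
  rw [← R.sum_weight_mul_card_filter univ R.trigger]
  refine sum_le_sum fun X _ => ?_
  rw [mul_comm]
  exact mul_le_mul_of_nonneg_left (mod_cast R.edgeLength_root_le X) (R.weight_pos X).le

lemma sum_edgeLength_insert_mul_edgeWeight_le :
    ∑ X : Finset B, ∑ b ∈ Xᶜ,
        R.edgeLength (some X, some (insert b X)) * R.edgeWeight (some X, some (insert b X)) ≤
      ∑ T, #(R.trigger T) * R.probOn (R.trigger T) := by
  calc
    _ ≤ ∑ X, ∑ b, R.prob b *
          (R.weight X * #{T ∈ {T | b ∈ R.trigger T} | (R.trigger T).erase b ⊆ X}) := by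
        refine sum_le_sum fun X _ => (sum_le_sum fun b hb => ?_).trans
          (sum_le_univ_sum_of_nonneg fun b => mul_nonneg (R.prob_pos b).le
            (mul_nonneg (R.weight_pos X).le (Nat.cast_nonneg _)))
        have hlen := R.edgeLength_insert_le X b
        simp only [subset_insert_iff] at hlen
        rw [R.edgeWeight_insert (mem_compl.1 hb), mul_comm, mul_comm (R.weight X), mul_assoc]
        exact mul_le_mul_of_nonneg_left
          (mul_le_mul_of_nonneg_left (mod_cast hlen) (R.weight_pos X).le) (R.prob_pos b).le
    _ = ∑ b, R.prob b * ∑ T with b ∈ R.trigger T, R.probOn ((R.trigger T).erase b) := by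
        rw [sum_comm]
        simp_rw [← mul_sum, R.sum_weight_mul_card_filter]
    _ = ∑ b, ∑ T with b ∈ R.trigger T, R.probOn (R.trigger T) := by
        refine sum_congr rfl fun b _ => ?_
        rw [mul_sum]
        refine sum_congr rfl fun T hT => mul_prod_erase _ _ (by simpa using hT)
    _ = ∑ T, #(R.trigger T) * R.probOn (R.trigger T) := by
        simp_rw [sum_filter]
        rw [sum_comm]
        simp

lemma sum_edgeLength_mul_edgeWeight_le :
    ∑ e ∈ edges B, R.edgeLength e * R.edgeWeight e ≤
      ∑ T, (1 + #(R.trigger T)) * R.probOn (R.trigger T) := by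
  simp_rw [sum_edges, one_add_mul, sum_add_distrib]
  exact add_le_add R.sum_edgeLength_root_mul_edgeWeight_le
    R.sum_edgeLength_insert_mul_edgeWeight_le

end Length

end Graph

section Path

variable {B : Type*} [DecidableEq B] {L : ℕ} {b : Fin L ↪ B}

/-- The edges of the path that leads from the root to `X` and then switches on the bits
`b 0, b 1, …` in this order. -/
def pathEdge (b : Fin L ↪ B) (X : Finset B) :
    Option (Fin L) → Option (Finset B) × Option (Finset B)
  | none => (none, some X)
  | some t => (some (X ∪ initSeg b t), some (X ∪ initSeg b (t + 1)))

lemma pathEdge_inj {X Y : Finset B} (hX : Disjoint X (univ.map b))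
    (hY : Disjoint Y (univ.map b)) {i j : Option (Fin L)} :
    pathEdge b X i = pathEdge b Y j ↔ X = Y ∧ i = j := by
  refine ⟨fun h => ?_, by rintro ⟨rfl, rfl⟩; rfl⟩
  rcases i with _ | s <;> rcases j with _ | t <;>
    simp only [pathEdge, Prod.mk.injEq, Option.some.injEq, reduceCtorEq, true_and,
      false_and] at h
  · exact ⟨h, rfl⟩
  obtain ⟨hsource, htarget⟩ := h
  have hXY : X = Y := by
    rw [← union_initSeg_sdiff hX s, hsource, union_initSeg_sdiff hY t]
  subst hXY
  rw [union_initSeg_succ, union_initSeg_succ, ← hsource,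
    insert_inj (notMem_union_initSeg hX s)] at htarget
  exact ⟨rfl, congrArg some (b.injective htarget)⟩

lemma pathEdge_mem_edges [Fintype B] {X : Finset B} (hX : Disjoint X (univ.map b))
    (j : Option (Fin L)) : pathEdge b X j ∈ edges B := by
  rcases j with _ | t
  · exact root_edge_mem X
  · rw [pathEdge, union_initSeg_succ]
    exact insert_edge_mem (notMem_union_initSeg hX t)

lemma sum_pathEdge_sub (b : Fin L ↪ B) (X : Finset B) (g : Option (Finset B) → ℝ) :
    ∑ j, (g (pathEdge b X j).2 - g (pathEdge b X j).1) =
      g (some (X ∪ univ.map b)) - g none := by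
  have htelescope := sum_range_sub (fun t => g (some (X ∪ initSeg b t))) L
  rw [initSeg_length, initSeg_zero, union_empty] at htelescope
  rw [← sub_add_sub_cancel _ (g (some X)), ← htelescope, ← Fin.sum_univ_eq_sum_range
    (fun t => g (some (X ∪ initSeg b (t + 1))) - g (some (X ∪ initSeg b t))), add_comm,
    Fintype.sum_option]
  rfl

end Path

section Flow

variable {ι B τ : Type*} [Fintype B] [DecidableEq B] (R : LoadingScheme ι B τ) {L : ℕ}
  (b : Fin L ↪ B)

/-- The probability that `X` is the set of bits that are on, given that those listed by `b` are
off (and `X` contains none of them). -/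
noncomputable def startProb (X : Finset B) : ℝ :=
  R.weight X / ∏ c ∈ univ.map b, (1 - R.prob c)

/-- The flow that picks a random set of bits off `b` and then follows the path switching on the
bits of `b`. -/
noncomputable def flow (e : Option (Finset B) × Option (Finset B)) : ℝ :=
  ∑ p ∈ (univ.map b)ᶜ.powerset ×ˢ univ, if pathEdge b p.1 p.2 = e then R.startProb b p.1 else 0

lemma startProb_pos (X : Finset B) : 0 < R.startProb b X :=
  div_pos (R.weight_pos X) (R.prod_one_sub_prob_pos _)

lemma startProb_le (X : Finset B) : R.startProb b X ≤ 2 ^ L * R.weight X := by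
  have hprod : (1 / 2 : ℝ) ^ L ≤ ∏ c ∈ univ.map b, (1 - R.prob c) := by
    have h := prod_le_prod (s := univ.map b) (f := fun _ => (1 / 2 : ℝ))
      (g := fun c => 1 - R.prob c) (fun _ _ => by norm_num)
      fun c _ => by linarith [R.prob_le_half c]
    simpa using h
  rw [startProb, div_le_iff₀ (R.prod_one_sub_prob_pos _)]
  calc R.weight X = 2 ^ L * R.weight X * (1 / 2) ^ L := by
        rw [mul_right_comm, ← mul_pow]; norm_num
    _ ≤ _ := mul_le_mul_of_nonneg_left hprod (by have := R.weight_pos X; positivity)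

lemma sum_startProb : ∑ X ∈ (univ.map b)ᶜ.powerset, R.startProb b X = 1 := by
  simp_rw [startProb, ← sum_div, weight, sum_bernoulliWeight_powerset_compl]
  exact div_self (R.prod_one_sub_prob_pos _).ne'

variable {b} in
lemma flow_pathEdge {X : Finset B} (hX : Disjoint X (univ.map b)) (j : Option (Fin L)) :
    R.flow b (pathEdge b X j) = R.startProb b X := by
  rw [flow, sum_eq_single_of_mem (X, j)]
  · exact if_pos rfl
  · simpa [subset_compl_iff_disjoint_right] using hX
  · rintro ⟨Y, i⟩ hY hne
    rw [mem_product, mem_powerset, subset_compl_iff_disjoint_right] at hY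
    exact if_neg fun h => hne (Prod.ext_iff.2 ((pathEdge_inj hY.1 hX).1 h))

lemma sum_flow_mul (F : Option (Finset B) × Option (Finset B) → ℝ) :
    ∑ e ∈ edges B, R.flow b e * F e =
      ∑ X ∈ (univ.map b)ᶜ.powerset, R.startProb b X * ∑ j, F (pathEdge b X j) := by
  simp_rw [flow, sum_mul, mul_sum, ite_mul, zero_mul]
  rw [sum_comm, sum_product]
  refine sum_congr rfl fun X hX => sum_congr rfl fun j _ => ?_
  rw [mem_powerset, subset_compl_iff_disjoint_right] at hX
  rw [sum_ite_eq, if_pos (pathEdge_mem_edges hX j)]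

lemma net_inflow (v : Option (Finset B)) :
    (∑ e ∈ edges B, if e.2 = v then R.flow b e else 0) -
        ∑ e ∈ edges B, (if e.1 = v then R.flow b e else 0) =
      ∑ X ∈ (univ.map b)ᶜ.powerset, R.startProb b X *
        ((if some (X ∪ univ.map b) = v then 1 else 0) - if none = v then 1 else 0) := by
  have h := R.sum_flow_mul b fun e => (if e.2 = v then 1 else 0) - if e.1 = v then 1 else 0
  simp_rw [sum_pathEdge_sub b _ fun u => if u = v then (1 : ℝ) else 0, mul_sub, mul_ite, mul_one,
    mul_zero, sum_sub_distrib] at h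
  simpa only [mul_sub, mul_ite, mul_one, mul_zero, sum_sub_distrib] using h

lemma net_outflow_root :
    (∑ e ∈ edges B, if e.1 = none then R.flow b e else 0) -
      ∑ e ∈ edges B, (if e.2 = none then R.flow b e else 0) = 1 := by
  rw [← neg_sub, R.net_inflow b none]
  simp [sum_startProb]

lemma net_inflow_some (Y : Finset B) :
    (∑ e ∈ edges B, if e.2 = some Y then R.flow b e else 0) -
        ∑ e ∈ edges B, (if e.1 = some Y then R.flow b e else 0) =
      if univ.map b ⊆ Y then R.startProb b (Y \ univ.map b) else 0 := by
  rw [R.net_inflow b (some Y)]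
  simp only [Option.some.injEq, reduceCtorEq, if_false, sub_zero, mul_ite, mul_one, mul_zero]
  split_ifs with hY
  · rw [sum_eq_single_of_mem (Y \ univ.map b)]
    · exact if_pos (sdiff_union_of_subset hY)
    · simp [subset_compl_iff_disjoint_right, sdiff_disjoint]
    · intro X hX hne
      rw [mem_powerset, subset_compl_iff_disjoint_right] at hX
      refine if_neg fun h => hne ?_
      rw [← h, union_sdiff_cancel_right hX]
  · exact sum_eq_zero fun X _ => if_neg (by rintro rfl; exact hY subset_union_right)

end Flow

section PositiveComplexity

variable {ι B τ : Type*} [Fintype B] [DecidableEq B] (R : LoadingScheme ι B τ) {L : ℕ}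
  {b : Fin L ↪ B}

lemma weight_mul_probOn_le_edgeWeight {X : Finset B} (hX : Disjoint X (univ.map b))
    (t : Fin L) :
    R.weight X * R.probOn (initSeg b (t + 1)) ≤ R.edgeWeight (pathEdge b X (some t)) := by
  rw [pathEdge, union_initSeg_succ, R.edgeWeight_insert (notMem_union_initSeg hX t),
    initSeg_succ, R.probOn_insert (notMem_initSeg b t), mul_left_comm, mul_comm (R.prob _)]
  exact mul_le_mul_of_nonneg_right
    (R.weight_mul_probOn_le (hX.mono_right (initSeg_subset b t))) (R.prob_pos _).le

variable (b) in
lemma startProb_sq_div_le {X : Finset B} {p w : ℝ} (hp : 0 < p) (hw : R.weight X * p ≤ w) :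
    R.startProb b X ^ 2 / w ≤ 4 ^ L * (p⁻¹ * R.weight X) := by
  have hX := R.weight_pos X
  calc R.startProb b X ^ 2 / w ≤ (2 ^ L * R.weight X) ^ 2 / (R.weight X * p) :=
        div_le_div₀ (sq_nonneg _)
          (pow_le_pow_left₀ (R.startProb_pos b X).le (R.startProb_le b X) 2) (by positivity) hw
    _ = (2 ^ L) ^ 2 * (p⁻¹ * R.weight X) := by field_simp
    _ = 4 ^ L * (p⁻¹ * R.weight X) := by rw [← pow_mul, mul_comm L, pow_mul]; norm_num

variable [DecidableEq ι] [Fintype τ]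

lemma sum_edgeLength_root_mul_startProb_sq_le (s : Finset (Finset B)) :
    ∑ X ∈ s, R.edgeLength (none, some X) *
        (R.startProb b X ^ 2 / R.edgeWeight (none, some X)) ≤
      4 ^ L * ∑ T, R.probOn (R.trigger T) := by
  rw [← R.sum_weight_mul_card_filter univ R.trigger, mul_sum]
  refine (sum_le_sum fun X _ => ?_).trans (sum_le_univ_sum_of_nonneg fun X => ?_)
  · calc
      _ ≤ (#{T | R.trigger T ⊆ X} : ℝ) * (4 ^ L * (1⁻¹ * R.weight X)) :=
        mul_le_mul (mod_cast R.edgeLength_root_le X)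
          (R.startProb_sq_div_le b one_pos (mul_one _).le)
          (div_nonneg (sq_nonneg _) (R.weight_pos X).le) (Nat.cast_nonneg _)
      _ = _ := by ring
  · have := R.weight_pos X
    positivity

lemma sum_edgeLength_step_mul_startProb_sq_le {s : Finset (Finset B)}
    (hs : ∀ X ∈ s, Disjoint X (univ.map b)) (t : Fin L) :
    ∑ X ∈ s, R.edgeLength (pathEdge b X (some t)) *
        (R.startProb b X ^ 2 / R.edgeWeight (pathEdge b X (some t))) ≤
      4 ^ L * R.switchCost (initSeg b (t + 1)) (b t) := by
  rw [switchCost, ← R.sum_weight_mul_card_filter, mul_sum, mul_sum]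
  refine (sum_le_sum fun X hX => ?_).trans (sum_le_univ_sum_of_nonneg fun X => ?_)
  · have hlength : R.edgeLength (pathEdge b X (some t)) ≤
        #{T ∈ {T | b t ∈ R.trigger T} | R.trigger T \ initSeg b (t + 1) ⊆ X} := by
      simp_rw [sdiff_le_iff, pathEdge, sup_eq_union, union_comm _ X, union_initSeg_succ]
      exact R.edgeLength_insert_le (X ∪ initSeg b t) (b t)
    calc
      _ ≤ (#{T ∈ {T | b t ∈ R.trigger T} | R.trigger T \ initSeg b (t + 1) ⊆ X} : ℝ) *
          (4 ^ L * ((R.probOn (initSeg b (t + 1)))⁻¹ * R.weight X)) :=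
        mul_le_mul (mod_cast hlength)
          (R.startProb_sq_div_le b (R.probOn_pos _)
            (R.weight_mul_probOn_le_edgeWeight (hs X hX) t))
          (div_nonneg (sq_nonneg _) (R.edgeWeight_pos _).le) (Nat.cast_nonneg _)
      _ = _ := by ring
  · have := R.weight_pos X
    have := R.probOn_pos (initSeg b (t + 1))
    positivity

variable (b) in
lemma sum_edgeLength_mul_flow_sq_le :
    ∑ e ∈ edges B, R.edgeLength e * R.flow b e ^ 2 / R.edgeWeight e ≤
      4 ^ L * (∑ T, R.probOn (R.trigger T) +
        ∑ t : Fin L, R.switchCost (initSeg b (t + 1)) (b t)) := by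
  have hdisj : ∀ X ∈ (univ.map b)ᶜ.powerset, Disjoint X (univ.map b) := fun X hX =>
    subset_compl_iff_disjoint_right.1 (mem_powerset.1 hX)
  calc
    _ = ∑ e ∈ edges B, R.flow b e * (R.edgeLength e * (R.flow b e / R.edgeWeight e)) :=
        sum_congr rfl fun e _ => by ring
    _ = ∑ X ∈ (univ.map b)ᶜ.powerset, ∑ j, R.edgeLength (pathEdge b X j) *
          (R.startProb b X ^ 2 / R.edgeWeight (pathEdge b X j)) := by
        rw [R.sum_flow_mul b]
        refine sum_congr rfl fun X hX => ?_
        rw [mul_sum]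
        refine sum_congr rfl fun j _ => ?_
        rw [R.flow_pathEdge (hdisj X hX)]
        ring
    _ ≤ 4 ^ L * ∑ T, R.probOn (R.trigger T) +
          ∑ t : Fin L, 4 ^ L * R.switchCost (initSeg b (t + 1)) (b t) := by
        simp_rw [Fintype.sum_option, sum_add_distrib]
        rw [sum_comm]
        exact add_le_add (R.sum_edgeLength_root_mul_startProb_sq_le _)
          (sum_le_sum fun t _ => R.sum_edgeLength_step_mul_startProb_sq_le hdisj t)
    _ = _ := by rw [← mul_sum, mul_add]

end PositiveComplexity

section LearningGraph

variable {ι B : Type} {τ : Type*} [Fintype ι] [DecidableEq ι] [Fintype B] [DecidableEq B]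
  [Fintype τ] (R : LoadingScheme ι B τ) {D : Set (ι → Bool)} {f : (ι → Bool) → Bool} {L : ℕ}
  (b : (ι → Bool) → Fin L ↪ B)
  (hcert : ∀ y ∈ D, f y = true → ∀ z ∈ D, (∀ i ∈ R.loaded (univ.map (b y)), z i = y i) →
    f z = true)

/-- The learning graph of a loading scheme: the flow of a positive input `y` switches on the bits
`b y`, which load a certificate of `y`. -/
noncomputable def learningGraph : LearningGraph D f where
  V := Option (Finset B)
  root := none
  E := edges B
  rank v := v.elim 0 fun X => #X + 1
  acyclic := forall_mem_edges.2 ⟨fun X => Nat.succ_pos _, fun X b hb => by simp [hb]⟩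
  S := R.label
  S_root := rfl
  S_mono := forall_mem_edges.2
    ⟨fun X => empty_subset _, fun X b _ => R.loaded_mono (subset_insert b X)⟩
  w := R.edgeWeight
  w_pos e _ := R.edgeWeight_pos e
  p y := R.flow (b y)
  flow_root y _ _ := R.net_outflow_root (b y)
  flow_cons y hyD hy v hv := by
    obtain ⟨Y, rfl⟩ := Option.ne_none_iff_exists'.1 hv
    rw [R.net_inflow_some (b y) Y]
    split_ifs with hY
    · exact .inr ⟨R.startProb_pos _ _, fun z hz hzy =>
        hcert y hyD hy z hz fun i hi => hzy i (R.loaded_mono hY hi)⟩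
    · exact .inl rfl

lemma learningGraph_C0_le :
    (R.learningGraph b hcert).C0 ≤ ∑ T, (1 + #(R.trigger T)) * R.probOn (R.trigger T) :=
  R.sum_edgeLength_mul_edgeWeight_le

lemma learningGraph_C1_le {K : ℝ} (hK : 0 ≤ K)
    (h : ∀ y ∈ D, f y = true → 4 ^ L * (∑ T, R.probOn (R.trigger T) +
      ∑ t : Fin L, R.switchCost (initSeg (b y) (t + 1)) (b y t)) ≤ K) :
    (R.learningGraph b hcert).C1 ≤ K :=
  Real.iSup_le (fun y => (R.sum_edgeLength_mul_flow_sq_le (b y)).trans (h y y.2.1 y.2.2)) hK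

end LearningGraph

end LoadingScheme

section Copy

variable {k n : ℕ} {H : SimpleGraph (Fin k)}

/-- The map `ψ` exhibits a copy of `H` in the graph `x`. -/
def IsCopy (H : SimpleGraph (Fin k)) (x : EdgeSlot n → Bool) (ψ : Fin k → Fin n) : Prop :=
  Function.Injective ψ ∧ ∀ i j, H.Adj i j →
    ∀ q : EdgeSlot n, s(q.1.1, q.1.2) = s(ψ i, ψ j) → x q = true

lemma hasHCopy_iff {x : EdgeSlot n → Bool} : HasHCopy H x ↔ ∃ ψ, IsCopy H x ψ := by
  simp only [HasHCopy, IsCopy, Sym2.eq_iff]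
  exact ⟨fun ⟨φ, hφ⟩ => ⟨φ, φ.injective, hφ⟩, fun ⟨ψ, hinj, hψ⟩ => ⟨⟨ψ, hinj⟩, hψ⟩⟩

lemma subgraphFn_eq_true_iff {x : EdgeSlot n → Bool} :
    subgraphFn H n x = true ↔ ∃ ψ, IsCopy H x ψ := by
  simp [subgraphFn, hasHCopy_iff]

lemma exists_edge_enumeration {V : Type*} {m : ℕ} (G : SimpleGraph V) [Fintype G.edgeSet]
    (hm : #G.edgeFinset = m) :
    ∃ ends : Fin m → V × V, Set.range (fun e => s((ends e).1, (ends e).2)) = G.edgeSet := by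
  let enum := G.edgeFinset.equivFinOfCardEq hm
  refine ⟨fun e => Quot.out (enum.symm e).1, ?_⟩
  calc
    _ = Set.range fun e => (enum.symm e).1 := congrArg Set.range (funext fun e => Quot.out_eq _)
    _ = G.edgeSet := by
      rw [← Function.comp_def, Set.range_comp, enum.symm.range_eq_univ]
      simp

end Copy

section PatternScheme

variable {k m n : ℕ} (ends : Fin m → Fin k × Fin k) {ρ s : ℝ}

/-- The random choices in the search for a pattern with `k` vertices and `m` edges: the bit
`inl (i, a)` allows the vertex `a` for the pattern vertex `i`, the bit `inr (e, a, c)` allows the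
pair `(a, c)` for the pattern edge `e`. -/
abbrev PatternBit (k m n : ℕ) := (Fin k × Fin n) ⊕ (Fin m × Fin n × Fin n)

lemma card_filter_edgeSlot_le_one (z : Sym2 (Fin n)) :
    #{q : EdgeSlot n | s(q.1.1, q.1.2) = z} ≤ 1 := by
  rw [card_le_one]
  rintro ⟨⟨a, b⟩, hab⟩ hq ⟨⟨c, d⟩, hcd⟩ hr
  simp only [mem_filter, mem_univ, true_and] at hq hr
  rcases Sym2.eq_iff.1 (hq.trans hr.symm) with ⟨rfl, rfl⟩ | ⟨rfl, rfl⟩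
  · rfl
  · exact absurd hab hcd.asymm

/-- The scheme that loads the pair `{a, c}` once it is allowed for a pattern edge `e` and both of
its vertices are allowed for the corresponding ends of `e`. -/
def patternScheme (hρ : ρ ∈ Set.Ioc 0 (1 / 2)) (hs : s ∈ Set.Ioc 0 (1 / 2)) :
    LoadingScheme (EdgeSlot n) (PatternBit k m n) (Fin m × Fin n × Fin n) where
  prob := Sum.elim (fun _ => ρ) fun _ => s
  prob_pos := by rintro (_ | _); exacts [hρ.1, hs.1]
  prob_le_half := by rintro (_ | _); exacts [hρ.2, hs.2]
  trigger T := {.inl ((ends T.1).1, T.2.1), .inl ((ends T.1).2, T.2.2), .inr T}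
  slot T := {q | s(q.1.1, q.1.2) = s(T.2.1, T.2.2)}
  card_slot_le_one T := card_filter_edgeSlot_le_one _

/-- The bits that allow the vertices of the map `ψ`. -/
def vertexBits (m : ℕ) (ψ : Fin k → Fin n) : Finset (PatternBit k m n) :=
  univ.image fun i => .inl (i, ψ i)

/-- The bits that allow the vertices and edges of the map `ψ`, vertices first. -/
def copyBits (ψ : Fin k → Fin n) : Fin (k + m) ↪ PatternBit k m n where
  toFun := Fin.append (fun i => .inl (i, ψ i))
    fun e => .inr (e, ψ (ends e).1, ψ (ends e).2)
  inj' := by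
    rw [Fin.append_injective_iff]
    exact ⟨fun i j h => by simp_all, fun e d h => by simp_all, by simp⟩

variable (hρ : ρ ∈ Set.Ioc 0 (1 / 2)) (hs : s ∈ Set.Ioc 0 (1 / 2)) (ψ : Fin k → Fin n)

section Trigger

variable {ends} (hends : ∀ e, (ends e).1 ≠ (ends e).2)
include hends

lemma probOn_trigger (T : Fin m × Fin n × Fin n) :
    (patternScheme ends hρ hs).probOn ((patternScheme ends hρ hs).trigger T) = ρ ^ 2 * s := by
  simp [LoadingScheme.probOn, patternScheme, hends]
  ring

lemma probOn_trigger_sdiff_vertexBits (T : Fin m × Fin n × Fin n) :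
    (patternScheme ends hρ hs).probOn ((patternScheme ends hρ hs).trigger T \ vertexBits m ψ) =
      (if ψ (ends T.1).1 = T.2.1 then 1 else ρ) *
        ((if ψ (ends T.1).2 = T.2.2 then 1 else ρ) * s) := by
  rw [LoadingScheme.probOn, sdiff_eq_filter, prod_filter]
  simp [patternScheme, hends, vertexBits]

lemma sum_probOn_trigger :
    ∑ T : Fin m × Fin n × Fin n,
        (patternScheme ends hρ hs).probOn ((patternScheme ends hρ hs).trigger T) =
      m * (n ^ 2 * ρ ^ 2 * s) := by
  simp [probOn_trigger hρ hs hends]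
  ring

lemma sum_probOn_trigger_sdiff_vertexBits_le (i : Fin k) :
    ∑ T with .inl (i, ψ i) ∈ (patternScheme ends hρ hs).trigger T,
        (patternScheme ends hρ hs).probOn ((patternScheme ends hρ hs).trigger T \ vertexBits m ψ) ≤
      m * (s * (1 + 2 * n * ρ)) := by
  have hρ0 := hρ.1
  have hs0 := hs.1
  calc
    _ ≤ ∑ T : Fin m × Fin n × Fin n,
          ((if ψ (ends T.1).1 = T.2.1 then if ψ (ends T.1).2 = T.2.2 then s else 0 else 0) +
            ((if ψ (ends T.1).1 = T.2.1 then ρ * s else 0) +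
              if ψ (ends T.1).2 = T.2.2 then ρ * s else 0)) := by
        rw [sum_filter]
        refine sum_le_sum fun T _ => ?_
        rw [probOn_trigger_sdiff_vertexBits hρ hs ψ hends]
        have hcopy : .inl (i, ψ i) ∈ (patternScheme ends hρ hs).trigger T →
            ψ (ends T.1).1 = T.2.1 ∨ ψ (ends T.1).2 = T.2.2 := by
          simp only [patternScheme, mem_insert, mem_singleton, Sum.inl.injEq, reduceCtorEq,
            Prod.mk.injEq, or_false]
          rintro (⟨rfl, h⟩ | ⟨rfl, h⟩)
          exacts [.inl h, .inr h]
        have hρs := mul_pos hρ0 hs0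
        split_ifs <;> first | linarith | tauto
    _ = _ := by
        have hfirst (v : Fin n) :
            ∑ a, ∑ _c : Fin n, (if v = a then ρ * s else 0) = n * (ρ * s) := by
          rw [sum_comm]
          simp
        simp [sum_add_distrib, Fintype.sum_prod_type, hfirst]
        ring

end Trigger

lemma probOn_vertexBits : (patternScheme ends hρ hs).probOn (vertexBits m ψ) = ρ ^ k := by
  rw [LoadingScheme.probOn, vertexBits, prod_image fun i _ j _ h => by simp_all]
  simp [patternScheme]

lemma probOn_copyBits :
    (patternScheme ends hρ hs).probOn (univ.map (copyBits ends ψ)) = ρ ^ k * s ^ m := by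
  simp [LoadingScheme.probOn, copyBits, patternScheme, Fin.prod_univ_add]

lemma initSeg_copyBits_subset_vertexBits (i : Fin k) :
    initSeg (copyBits ends ψ) (Fin.castAdd m i + 1) ⊆ vertexBits m ψ := by
  intro c hc
  simp only [initSeg, mem_map, mem_filter, mem_univ, true_and] at hc
  obtain ⟨j, hj, rfl⟩ := hc
  induction j using Fin.addCases with
  | left j => simp [vertexBits, copyBits]
  | right e =>
    simp only [Fin.val_natAdd, Fin.val_castAdd] at hj
    omega

variable {ends} in
lemma switchCost_vertex_le (hends : ∀ e, (ends e).1 ≠ (ends e).2) (i : Fin k) :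
    (patternScheme ends hρ hs).switchCost (initSeg (copyBits ends ψ) (Fin.castAdd m i + 1))
        (copyBits ends ψ (Fin.castAdd m i)) ≤
      (ρ ^ k)⁻¹ * (m * (s * (1 + 2 * n * ρ))) := by
  refine (LoadingScheme.switchCost_mono _
    (initSeg_copyBits_subset_vertexBits ends ψ i) _).trans ?_
  rw [LoadingScheme.switchCost, probOn_vertexBits]
  have hbit : copyBits ends ψ (Fin.castAdd m i) = .inl (i, ψ i) := by simp [copyBits]
  rw [hbit]
  exact mul_le_mul_of_nonneg_left (sum_probOn_trigger_sdiff_vertexBits_le hρ hs ψ hends i)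
    (inv_nonneg.2 (pow_nonneg hρ.1.le k))

lemma switchCost_edge_le (e : Fin m) :
    (patternScheme ends hρ hs).switchCost (initSeg (copyBits ends ψ) (Fin.natAdd k e + 1))
        (copyBits ends ψ (Fin.natAdd k e)) ≤ (ρ ^ k * s ^ m)⁻¹ := by
  refine (LoadingScheme.switchCost_mono _ (initSeg_subset _ _) _).trans ?_
  rw [LoadingScheme.switchCost, probOn_copyBits]
  have htriggered : ({T | copyBits ends ψ (Fin.natAdd k e) ∈
      (patternScheme ends hρ hs).trigger T} : Finset (Fin m × Fin n × Fin n)) =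
        {(e, ψ (ends e).1, ψ (ends e).2)} := by
    ext T
    simp [copyBits, patternScheme, eq_comm]
  rw [htriggered, sum_singleton]
  exact mul_le_of_le_one_right
    (inv_nonneg.2 (mul_nonneg (pow_nonneg hρ.1.le k) (pow_nonneg hs.1.le m)))
    (LoadingScheme.probOn_le_one _ _)

lemma loaded_copyBits {q : EdgeSlot n} {e : Fin m}
    (hq : s(q.1.1, q.1.2) = s(ψ (ends e).1, ψ (ends e).2)) :
    q ∈ (patternScheme ends hρ hs).loaded (univ.map (copyBits ends ψ)) := by
  refine LoadingScheme.slot_subset_loaded _ (T := (e, ψ (ends e).1, ψ (ends e).2)) ?_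
    (by simpa [patternScheme] using hq)
  have hvertex : ∀ i, .inl (i, ψ i) ∈ univ.map (copyBits ends ψ) := fun i =>
    mem_map.2 ⟨Fin.castAdd m i, mem_univ _, by simp [copyBits]⟩
  have hedge : .inr (e, ψ (ends e).1, ψ (ends e).2) ∈ univ.map (copyBits ends ψ) :=
    mem_map.2 ⟨Fin.natAdd k e, mem_univ _, by simp [copyBits]⟩
  simp only [patternScheme, insert_subset_iff, singleton_subset_iff]
  exact ⟨hvertex _, hvertex _, hedge⟩

variable {ends ψ}

lemma IsCopy.congr_of_loaded {H : SimpleGraph (Fin k)}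
    (hends : Set.range (fun e => s((ends e).1, (ends e).2)) = H.edgeSet)
    {y z : EdgeSlot n → Bool} (hψ : IsCopy H y ψ)
    (hz : ∀ q ∈ (patternScheme ends hρ hs).loaded (univ.map (copyBits ends ψ)), z q = y q) :
    IsCopy H z ψ := by
  refine ⟨hψ.1, fun i j hij q hq => ?_⟩
  obtain ⟨e, he⟩ : s(i, j) ∈ Set.range fun e => s((ends e).1, (ends e).2) := hends ▸ hij
  rw [hz q, hψ.2 i j hij q hq]
  refine loaded_copyBits ends hρ hs ψ (e := e) (hq.trans ?_)
  simpa using congrArg (Sym2.map ψ) he.symm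

include hρ hs in
lemma exists_learningGraph_complexity_le {H : SimpleGraph (Fin k)} [NeZero n]
    (hends : Set.range (fun e => s((ends e).1, (ends e).2)) = H.edgeSet) {K : ℝ}
    (hC0 : 4 * (m * (n ^ 2 * ρ ^ 2 * s)) ≤ K)
    (hC1 : 4 ^ (k + m) * (m * (n ^ 2 * ρ ^ 2 * s) +
      (k * ((ρ ^ k)⁻¹ * (m * (s * (1 + 2 * n * ρ)))) + m * (ρ ^ k * s ^ m)⁻¹)) ≤ K) :
    ∃ G : LearningGraph (Set.univ : Set (EdgeSlot n → Bool)) (subgraphFn H n),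
      G.complexity ≤ K := by
  have hne : ∀ e, (ends e).1 ≠ (ends e).2 := fun e =>
    SimpleGraph.Adj.ne (G := H) (hends ▸ Set.mem_range_self e : s(_, _) ∈ H.edgeSet)
  let copy (y : EdgeSlot n → Bool) : Fin k → Fin n := Classical.epsilon (IsCopy H y)
  have hcopy : ∀ y, subgraphFn H n y = true → IsCopy H y (copy y) := fun y hy =>
    Classical.epsilon_spec (subgraphFn_eq_true_iff.1 hy)
  refine ⟨(patternScheme ends hρ hs).learningGraph (fun y => copyBits ends (copy y))
    fun y _ hy z _ hz => subgraphFn_eq_true_iff.2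
      ⟨copy y, (hcopy y hy).congr_of_loaded hρ hs hends hz⟩,
    LearningGraph.complexity_le _ ?_ ?_⟩
  · refine (LoadingScheme.learningGraph_C0_le _ _ _).trans (le_trans ?_ hC0)
    rw [← sum_probOn_trigger hρ hs hne, mul_sum]
    refine sum_le_sum fun T _ => mul_le_mul_of_nonneg_right ?_ (LoadingScheme.probOn_pos _ _).le
    have hcard : #((patternScheme ends hρ hs).trigger T) ≤ 3 := card_le_three
    have hcard' : (#((patternScheme ends hρ hs).trigger T) : ℝ) ≤ 3 := mod_cast hcard
    linarith
  · refine LoadingScheme.learningGraph_C1_le _ _ _ (le_trans ?_ hC0) fun y _ _ => le_trans ?_ hC1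
    · have := hs.1
      positivity
    rw [sum_probOn_trigger hρ hs hne, Fin.sum_univ_add]
    gcongr
    · simpa using sum_le_sum (s := univ) fun i _ => switchCost_vertex_le hρ hs (copy y) hne i
    · simpa using sum_le_sum (s := univ) fun e _ => switchCost_edge_le ends hρ hs (copy y) e

end PatternScheme

section Balance

variable {k m : ℕ} {x ρ s : ℝ}

lemma exists_balanced_probs (k m : ℕ) (hx : 1 ≤ x) :
    ∃ ρ ∈ Set.Ioc (0 : ℝ) 1, ∃ s ∈ Set.Ioc (0 : ℝ) 1,
      x * ρ ^ (k + 1) = 1 ∧ x * ρ * s ^ (m + 1) = 1 ∧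
        x ^ 2 * ρ ^ 2 * s = x ^ ((2 : ℝ) - 2 / (k + 1) - k / ((k + 1) * (m + 1))) := by
  have hx0 : 0 < x := one_pos.trans_le hx
  have hmem : ∀ a : ℝ, 0 ≤ a → x ^ (-a) ∈ Set.Ioc (0 : ℝ) 1 := fun a ha =>
    ⟨Real.rpow_pos_of_pos hx0 _, Real.rpow_le_one_of_one_le_of_nonpos hx (neg_nonpos.2 ha)⟩
  let a : ℝ := 1 / (k + 1)
  let b : ℝ := k / ((k + 1) * (m + 1))
  have hmonomial (i j l : ℕ) :
      x ^ i * (x ^ (-a)) ^ j * (x ^ (-b)) ^ l = x ^ (i - j * a - l * b) := by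
    rw [← Real.rpow_natCast x, ← Real.rpow_mul_natCast hx0.le, ← Real.rpow_mul_natCast hx0.le,
      ← Real.rpow_add hx0, ← Real.rpow_add hx0]
    ring_nf
  refine ⟨x ^ (-a), hmem a (by positivity), x ^ (-b), hmem b (by positivity), ?_, ?_, ?_⟩
  · have hexp : ((1 : ℕ) : ℝ) - (k + 1 : ℕ) * a - (0 : ℕ) * b = 0 := by
      simp only [a]
      push_cast
      field_simp
      ring
    simpa only [hexp, pow_one, pow_zero, mul_one, Real.rpow_zero] using hmonomial 1 (k + 1) 0
  · have hexp : ((1 : ℕ) : ℝ) - (1 : ℕ) * a - (m + 1 : ℕ) * b = 0 := by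
      simp only [a, b]
      push_cast
      field_simp
      ring
    simpa only [hexp, pow_one, Real.rpow_zero] using hmonomial 1 1 (m + 1)
  · have hexp : ((2 : ℕ) : ℝ) - (2 : ℕ) * a - (1 : ℕ) * b =
        2 - 2 / (k + 1) - k / ((k + 1) * (m + 1)) := by
      simp only [a, b]
      push_cast
      ring
    simpa only [hexp, pow_one] using hmonomial 2 2 1

lemma inv_half_pow_of_mul_pow_succ_eq_one (h : x * ρ ^ (k + 1) = 1) :
    ((ρ / 2) ^ k)⁻¹ = 2 ^ k * (x * ρ) := by
  refine inv_eq_of_mul_eq_one_right ?_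
  rw [← h, div_pow, pow_succ]
  field_simp

lemma negative_cost_le (hs : 0 ≤ s) :
    4 * (m * (x ^ 2 * (ρ / 2) ^ 2 * (s / 2))) ≤ m * (x ^ 2 * ρ ^ 2 * s) := by
  have hcost : 0 ≤ m * (x ^ 2 * ρ ^ 2 * s) := by positivity
  linarith

lemma positive_cost_le (hρ : ρ ∈ Set.Ioc 0 1) (hs : 0 ≤ s) (hxρ : x * ρ ^ (k + 1) = 1)
    (hxs : x * ρ * s ^ (m + 1) = 1) :
    m * (x ^ 2 * (ρ / 2) ^ 2 * (s / 2)) +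
        (k * (((ρ / 2) ^ k)⁻¹ * (m * (s / 2 * (1 + 2 * x * (ρ / 2))))) +
          m * ((ρ / 2) ^ k * (s / 2) ^ m)⁻¹) ≤
      (1 + k * 2 ^ k + 2 ^ (k + m)) * (m * (x ^ 2 * ρ ^ 2 * s)) := by
  have hxρ0 : 1 ≤ x * ρ := by
    have hpow : ρ ^ k ≤ 1 := pow_le_one₀ hρ.1.le hρ.2
    have hmul : x * ρ * ρ ^ k = 1 := by rw [← hxρ]; ring
    by_contra! hlt
    nlinarith [pow_pos hρ.1 k]
  have hvertices : x * ρ * (m * (s / 2 * (1 + 2 * x * (ρ / 2)))) ≤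
      m * (x ^ 2 * ρ ^ 2 * s) := by
    calc
      _ = m * s * (x * ρ) * ((1 + x * ρ) / 2) := by ring
      _ ≤ m * s * (x * ρ) * (x * ρ) := by gcongr; linarith
      _ = _ := by ring
  have hload : m * (x ^ 2 * (ρ / 2) ^ 2 * (s / 2)) ≤ m * (x ^ 2 * ρ ^ 2 * s) := by
    linarith [negative_cost_le (m := m) (x := x) (ρ := ρ) hs,
      show 0 ≤ m * (x ^ 2 * (ρ / 2) ^ 2 * (s / 2)) by positivity]
  rw [mul_inv, inv_half_pow_of_mul_pow_succ_eq_one hxρ, inv_half_pow_of_mul_pow_succ_eq_one hxs]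
  calc
    _ = m * (x ^ 2 * (ρ / 2) ^ 2 * (s / 2)) +
          (k * 2 ^ k * (x * ρ * (m * (s / 2 * (1 + 2 * x * (ρ / 2))))) +
            2 ^ (k + m) * (m * (x ^ 2 * ρ ^ 2 * s))) := by ring
    _ ≤ m * (x ^ 2 * ρ ^ 2 * s) + (k * 2 ^ k * (m * (x ^ 2 * ρ ^ 2 * s)) +
          2 ^ (k + m) * (m * (x ^ 2 * ρ ^ 2 * s))) := by gcongr
    _ = _ := by ring

lemma exists_learningGraph_complexity_le_of_balanced {n : ℕ} [NeZero n]
    {H : SimpleGraph (Fin k)} {ends : Fin m → Fin k × Fin k}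
    (hends : Set.range (fun e => s((ends e).1, (ends e).2)) = H.edgeSet)
    (hρ : ρ ∈ Set.Ioc 0 1) (hs : s ∈ Set.Ioc 0 1) (hnρ : n * ρ ^ (k + 1) = 1)
    (hns : n * ρ * s ^ (m + 1) = 1) :
    ∃ G : LearningGraph (Set.univ : Set (EdgeSlot n → Bool)) (subgraphFn H n),
      G.complexity ≤
        4 ^ (k + m) * ((1 + k * 2 ^ k + 2 ^ (k + m)) * (m * (n ^ 2 * ρ ^ 2 * s))) := by
  have hhalf {t : ℝ} (ht : t ∈ Set.Ioc 0 1) : t / 2 ∈ Set.Ioc 0 (1 / 2) :=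
    ⟨half_pos ht.1, by linarith [ht.2]⟩
  have hcost : 0 ≤ m * (n ^ 2 * ρ ^ 2 * s) := by
    have := hs.1
    positivity
  have hpow : (1 : ℝ) ≤ 4 ^ (k + m) := one_le_pow₀ (by norm_num)
  have hfactor : (1 : ℝ) ≤ 1 + k * 2 ^ k + 2 ^ (k + m) := by
    rw [add_assoc, le_add_iff_nonneg_right]
    positivity
  refine exists_learningGraph_complexity_le (hhalf hρ) (hhalf hs) hends ?_ ?_
  · exact (negative_cost_le hs.1.le).trans <| (le_mul_of_one_le_left hcost hfactor).trans <|
      le_mul_of_one_le_left (mul_nonneg (zero_le_one.trans hfactor) hcost) hpow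
  · exact mul_le_mul_of_nonneg_left (positive_cost_le hρ hs.1.le hnρ hns)
      (zero_le_one.trans hpow)

end Balance

theorem subgraph_learningGraph_direct_general (k m : ℕ) :
    ∃ c : ℝ, 0 < c ∧ ∀ (H : SimpleGraph (Fin k)) [Fintype H.edgeSet], #H.edgeFinset = m →
      ∀ n : ℕ, 1 ≤ n →
        ∃ G : LearningGraph (Set.univ : Set (EdgeSlot n → Bool)) (subgraphFn H n),
          G.complexity ≤
            c * (n : ℝ) ^ ((2 : ℝ) - 2 / (k + 1) - k / ((k + 1) * (m + 1))) := by
  refine ⟨4 ^ (k + m) * ((1 + k * 2 ^ k + 2 ^ (k + m)) * (m + 1)), by positivity, ?_⟩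
  intro H _ hm n hn
  have : NeZero n := ⟨(Nat.zero_lt_of_lt hn).ne'⟩
  obtain ⟨ends, hends⟩ := exists_edge_enumeration H hm
  obtain ⟨ρ, hρ, s, hs, hnρ, hns, hbudget⟩ :=
    exists_balanced_probs (x := n) k m (mod_cast hn)
  obtain ⟨G, hG⟩ := exists_learningGraph_complexity_le_of_balanced hends hρ hs hnρ hns
  have hs0 := hs.1
  refine ⟨G, hG.trans ?_⟩
  calc
    _ ≤ 4 ^ (k + m) * ((1 + k * 2 ^ k + 2 ^ (k + m)) * ((m + 1) * (n ^ 2 * ρ ^ 2 * s))) := by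
      gcongr
      simp
    _ = _ := by
      rw [hbudget]
      ring

/-- **Theorem 1 of the paper.** For a fixed graph `H` on `k ≥ 3` vertices with `m ≥ 1` edges,
there is a learning graph for the subgraph-detection function `f_{H,n}` of complexity
`O(n^{2 - 2/(k+1) - k/((k+1)(m+1))})`. -/
theorem subgraph_learningGraph_direct (k m : ℕ) (hk : 3 ≤ k)
    (H : SimpleGraph (Fin k)) [DecidableRel H.Adj]
    (hm : H.edgeFinset.card = m) (hm1 : 1 ≤ m) :
    ∃ c : ℝ, 0 < c ∧ ∀ n : ℕ, 1 ≤ n →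
      ∃ G : LearningGraph (Set.univ : Set (EdgeSlot n → Bool)) (subgraphFn H n),
        G.complexity ≤
          c * (n : ℝ) ^ ((2 : ℝ) - 2 / (k + 1) - k / ((k + 1) * (m + 1))) := by
  obtain ⟨c, hc, h⟩ := subgraph_learningGraph_direct_general k m
  exact ⟨c, hc, h H hm⟩
end

section
/- Let H be a fixed simple graph on k ≥ 3 vertices with m edges and minimum degree d ≥ 1. There is a constant c > 0 depending only on H such that for every n ≥ 1 there exists a learning graph for the subgraph-detection function f_{H,n} whose complexity is at most c · n^{2 - 2/k - (2k-d-3)/(k(d+1)(m-d+2))}. -/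
/-!
The learning graph loads *placements*: of a vertex of `H` at a position `a`, or of an edge of `H` at
a pair of positions. An adjacency is queried once a placement of some edge is loaded together with
placements of both its ends. At first, every placement of an element `c` of `H` is loaded
independently with probability `n ^ (-x c)`; then one further placement of every element is loaded,
each vertex before its edges. On a positive input the flow loads the placements belonging to a copy
of `H`, having avoided them at the start. The weights are proportional to the probabilities of the
sets of placements loaded, so that the energy of the flow is governed by a likelihood ratio, and
this ratio gains a factor `n ^ x c` whenever an element `c` is planted. The stage of `c` then costs
the square root of the product of the ratio so far, the number of queries made by all the placements
of `c`, each on its own, and the number made by the right one.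

Fix a vertex `v` of degree `d`, and plant the other vertices, the edges avoiding `v`, then `v`, and
finally the edges at `v`. With `x = 1 / k` for the vertices other than `v` and `x = 1` for `v`, the
two remaining exponents are chosen so as to balance the stages.
-/

section

open Finset

/-! ### Learning graphs presented by arcs -/

namespace LearningGraph

section Complexity

variable {ι : Type} [Fintype ι] [DecidableEq ι] {D : Set (ι → Bool)} {f : (ι → Bool) → Bool}

theorem C1_nonneg_s1 (G : LearningGraph D f) : 0 ≤ G.C1 :=
  Real.iSup_nonneg fun _ => sum_nonneg fun e he =>
    div_nonneg (mul_nonneg (Nat.cast_nonneg _) (sq_nonneg _)) (G.w_pos e he).le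

theorem complexity_le_s1 (G : LearningGraph D f) {K₀ K₁ : ℝ} (hK₀ : 0 ≤ K₀) (hK₁ : 0 ≤ K₁)
    (h₀ : G.C0 ≤ K₀)
    (h₁ : ∀ y ∈ D, f y = true → ∑ e ∈ G.E, (G.len e : ℝ) * G.p y e ^ 2 / G.w e ≤ K₁) :
    G.complexity ≤ √(K₀ * K₁) :=
  Real.sqrt_le_sqrt <|
    mul_le_mul h₀ (Real.iSup_le (fun y => h₁ y.1 y.2.1 y.2.2) hK₁) G.C1_nonneg_s1 hK₀

end Complexity

end LearningGraph

/-- A learning graph whose edges are presented as an indexed family of arcs. This allows weights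
and flows to be defined by cases on the arc rather than on pairs of vertices. -/
structure ArcPresentation {ι : Type} [DecidableEq ι] (D : Set (ι → Bool))
    (f : (ι → Bool) → Bool) (V A : Type) [DecidableEq V] [Fintype A] where
  root : V
  src : A → V
  tgt : A → V
  arc_injective : Function.Injective fun a => (src a, tgt a)
  rank : V → ℕ
  rank_lt : ∀ a, rank (src a) < rank (tgt a)
  S : V → Finset ι
  S_root : S root = ∅
  S_mono : ∀ a, S (src a) ⊆ S (tgt a)
  w : A → ℝ
  w_pos : ∀ a, 0 < w a
  p : (ι → Bool) → A → ℝ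
  flow_root : ∀ y ∈ D, f y = true →
    ∑ a with src a = root, p y a - ∑ a with tgt a = root, p y a = 1
  flow_cons : ∀ y ∈ D, f y = true → ∀ v ≠ root,
    ∑ a with tgt a = v, p y a - ∑ a with src a = v, p y a = 0 ∨
      0 < ∑ a with tgt a = v, p y a - ∑ a with src a = v, p y a ∧
        ∀ z ∈ D, (∀ i ∈ S v, z i = y i) → f z = true

namespace ArcPresentation

variable {ι : Type} [DecidableEq ι] {D : Set (ι → Bool)} {f : (ι → Bool) → Bool}
  {V A : Type} [DecidableEq V] [Fintype A]

/-- The ends of an arc. -/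
def ends (P : ArcPresentation D f V A) (a : A) : V × V := (P.src a, P.tgt a)

/-- The number of variables loaded along an arc. -/
def len (P : ArcPresentation D f V A) (a : A) : ℕ := #(P.S (P.tgt a) \ P.S (P.src a))

theorem extend_ends (P : ArcPresentation D f V A) (g : A → ℝ) (a : A) :
    Function.extend P.ends g 0 (P.ends a) = g a :=
  P.arc_injective.extend_apply g 0 a

theorem sum_image_ends (P : ArcPresentation D f V A) (g : V × V → ℝ) :
    ∑ e ∈ univ.image P.ends, g e = ∑ a, g (P.ends a) :=
  sum_image fun _ _ _ _ h => P.arc_injective h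

variable [Fintype ι] [Fintype V]

/-- The learning graph presented by an indexed family of arcs. -/
noncomputable def toLearningGraph (P : ArcPresentation D f V A) : LearningGraph D f where
  V := V
  root := P.root
  E := univ.image P.ends
  rank := P.rank
  acyclic := by simpa [ends] using P.rank_lt
  S := P.S
  S_root := P.S_root
  S_mono := by simpa [ends] using P.S_mono
  w := Function.extend P.ends P.w 0
  w_pos := by simpa [extend_ends] using P.w_pos
  p y := Function.extend P.ends (P.p y) 0
  flow_root y hyD hy := by
    have h := P.flow_root y hyD hy
    simp only [sum_filter] at h
    simp only [sum_image_ends, extend_ends]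
    exact h
  flow_cons y hyD hy v hv := by
    have h := P.flow_cons y hyD hy v hv
    simp only [sum_filter] at h
    simp only [sum_image_ends, extend_ends]
    exact h

theorem complexity_toLearningGraph_le (P : ArcPresentation D f V A) {K₀ K₁ : ℝ}
    (hK₀ : 0 ≤ K₀) (hK₁ : 0 ≤ K₁) (h₀ : ∑ a, (P.len a : ℝ) * P.w a ≤ K₀)
    (h₁ : ∀ y ∈ D, f y = true → ∑ a, (P.len a : ℝ) * P.p y a ^ 2 / P.w a ≤ K₁) :
    P.toLearningGraph.complexity ≤ √(K₀ * K₁) := by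
  refine LearningGraph.complexity_le_s1 _ hK₀ hK₁ ?_ fun y hyD hy => ?_
  · refine ((P.sum_image_ends _).trans ?_).trans_le h₀
    simp only [toLearningGraph, extend_ends]
    rfl
  · refine ((P.sum_image_ends _).trans ?_).trans_le (h₁ y hyD hy)
    simp only [toLearningGraph, extend_ends]
    rfl

end ArcPresentation

/-! ### Random subsets -/

section RandomSubset

variable {U R : Type*} [Fintype U] [DecidableEq U]

/-- The probability of `X` when every `x : U` is selected independently with probability `q x`. -/
def subsetProb [CommRing R] (q : U → R) (X : Finset U) : R :=
  ∏ x, if x ∈ X then q x else 1 - q x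

/-- The expectation of `g X` when every `x : U` is put into `X` independently with
probability `q x`. -/
def subsetMean [CommRing R] (q : U → R) (g : Finset U → R) : R :=
  ∑ X, subsetProb q X * g X

section CommRing

variable [CommRing R]

theorem subsetProb_eq_zero_of_mem {q : U → R} {x : U} {X : Finset U} (hx : x ∈ X) (hq : q x = 0) :
    subsetProb q X = 0 :=
  prod_eq_zero (mem_univ x) (by simp [hx, hq])

theorem subsetProb_eq_zero_of_notMem {q : U → R} {x : U} {X : Finset U} (hx : x ∉ X)
    (hq : q x = 1) : subsetProb q X = 0 :=
  prod_eq_zero (mem_univ x) (by simp [hx, hq])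

theorem sum_prod_ite_mem (f g : U → R) :
    ∑ X : Finset U, ∏ x, (if x ∈ X then f x else g x) = ∏ x, (f x + g x) := by
  rw [Fintype.prod_add]
  refine sum_congr rfl fun X _ => ?_
  rw [prod_ite, filter_univ_mem]
  congr 2
  ext
  simp

/-- Selections containing `Z` are counted by giving the elements of `Z` weight `0` for not being
selected. -/
theorem subsetMean_subset (q : U → R) (Z : Finset U) :
    subsetMean q (fun X => if Z ⊆ X then 1 else 0) = ∏ z ∈ Z, q z := by
  have hweight (X : Finset U) : subsetProb q X * (if Z ⊆ X then 1 else 0) =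
      ∏ x, if x ∈ X then q x else if x ∈ Z then 0 else 1 - q x := by
    split_ifs with hZ
    · rw [mul_one]
      exact prod_congr rfl fun x _ => by grind
    · obtain ⟨x, hxZ, hxX⟩ := not_subset.1 hZ
      rw [mul_zero, prod_eq_zero (mem_univ x) (by simp [hxZ, hxX])]
  simp only [subsetMean, hweight, sum_prod_ite_mem]
  rw [← Fintype.prod_ite_mem Z q]
  refine prod_congr rfl fun x _ => ?_
  split_ifs <;> simp

theorem sum_subsetProb (q : U → R) : ∑ X, subsetProb q X = 1 := by
  simpa [subsetMean] using subsetMean_subset q ∅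

theorem subsetMean_sum {Γ : Type*} (q : U → R) (s : Finset Γ) (g : Γ → Finset U → R) :
    subsetMean q (fun X => ∑ γ ∈ s, g γ X) = ∑ γ ∈ s, subsetMean q (g γ) := by
  simp only [subsetMean, mul_sum]
  exact sum_comm

end CommRing

section Order

variable [CommRing R] [PartialOrder R]

theorem subsetProb_nonneg [IsOrderedRing R] {q : U → R} (h₀ : ∀ x, 0 ≤ q x) (h₁ : ∀ x, q x ≤ 1)
    (X : Finset U) : 0 ≤ subsetProb q X :=
  prod_nonneg fun x _ => by split_ifs; exacts [h₀ x, sub_nonneg.2 (h₁ x)]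

theorem subsetProb_pos [IsStrictOrderedRing R] {q : U → R} (h₀ : ∀ x, 0 < q x)
    (h₁ : ∀ x, q x < 1) (X : Finset U) : 0 < subsetProb q X :=
  prod_pos fun x _ => by split_ifs; exacts [h₀ x, sub_pos.2 (h₁ x)]

theorem subsetMean_mono [IsOrderedRing R] {q : U → R} (h₀ : ∀ x, 0 ≤ q x) (h₁ : ∀ x, q x ≤ 1)
    {g g' : Finset U → R} (h : ∀ X, g X ≤ g' X) : subsetMean q g ≤ subsetMean q g' :=
  sum_le_sum fun X _ => mul_le_mul_of_nonneg_left (h X) (subsetProb_nonneg h₀ h₁ X)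

end Order

end RandomSubset

/-! ### Planted elements -/

section PlantedDensity

variable {U : Type*} [DecidableEq U] {T : ℕ}

/-- The selection probabilities after the first `t` steps of planting elements `m 0, m 1, …`,
where `part x` is the class of `x` and `m s` belongs to class `s`: planted elements are present,
the `m s` still to come are absent, and every other `x` keeps its probability `q (part x)`. -/
def plantedDensity (part : U → Fin T) (q : Fin T → ℝ) (m : Fin T → U) (t : ℕ) (x : U) : ℝ :=
  if m (part x) = x then (if part x < t then 1 else 0) else q (part x)

variable {part : U → Fin T} {q : Fin T → ℝ} {m : Fin T → U}

theorem plantedDensity_nonneg (hq : ∀ s, 0 ≤ q s) (t : ℕ) (x : U) :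
    0 ≤ plantedDensity part q m t x := by
  unfold plantedDensity
  have := hq (part x)
  split_ifs <;> linarith

theorem plantedDensity_le_one (hq : ∀ s, q s ≤ 1) (t : ℕ) (x : U) :
    plantedDensity part q m t x ≤ 1 := by
  unfold plantedDensity
  have := hq (part x)
  split_ifs <;> linarith

theorem plantedDensity_marked (hm : ∀ s, part (m s) = s) (t : ℕ) (s : Fin T) :
    plantedDensity part q m t (m s) = if s < t then 1 else 0 := by
  simp [plantedDensity, hm]

theorem plantedDensity_le (hq : ∀ s, 0 ≤ q s) {t : ℕ} {x : U}
    (hx : m (part x) = x → t ≤ part x) : plantedDensity part q m t x ≤ q (part x) := by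
  unfold plantedDensity
  split_ifs with h₁ h₂
  · exact absurd h₂ (hx h₁).not_gt
  · exact hq _
  · exact le_rfl

theorem plantedDensity_succ_of_ne {s : Fin T} {x : U} (hx : x ≠ m s) :
    plantedDensity part q m (s + 1) x = plantedDensity part q m s x := by
  unfold plantedDensity
  split_ifs with h₁ h₂ h₃ h₃ <;> try rfl
  · exact absurd ((Fin.ext (by omega) : part x = s) ▸ h₁).symm hx
  · omega

variable [Fintype U]

theorem marked_mem_of_subsetProb_plantedDensity_ne_zero (hm : ∀ s, part (m s) = s) {t : ℕ}
    {s : Fin T} (hs : s < t) {X : Finset U} (hX : subsetProb (plantedDensity part q m t) X ≠ 0) :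
    m s ∈ X :=
  of_not_not fun h => hX <|
    subsetProb_eq_zero_of_notMem h (by rw [plantedDensity_marked hm, if_pos hs])

theorem subsetProb_plantedDensity_eq_zero_of_marked_mem (hm : ∀ s, part (m s) = s) {t : ℕ}
    {s : Fin T} (hs : t ≤ s) {X : Finset U} (hX : m s ∈ X) :
    subsetProb (plantedDensity part q m t) X = 0 :=
  subsetProb_eq_zero_of_mem hX (by rw [plantedDensity_marked hm, if_neg hs.not_gt])

theorem subsetProb_plantedDensity_insert (hm : ∀ s, part (m s) = s) {s : Fin T} {X : Finset U}
    (hX : m s ∉ X) :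
    subsetProb (plantedDensity part q m (s + 1)) (insert (m s) X) =
      subsetProb (plantedDensity part q m s) X :=
  prod_congr rfl fun x _ => by
    obtain rfl | hx := eq_or_ne x (m s)
    · simp [plantedDensity_marked hm, hX]
    · simp [plantedDensity_succ_of_ne hx, hx]

theorem sum_subsetProb_plantedDensity_insert_eq (hm : ∀ s, part (m s) = s) (s : Fin T)
    (Y : Finset U) :
    ∑ X with insert (m s) X = Y, subsetProb (plantedDensity part q m s) X =
      subsetProb (plantedDensity part q m (s + 1)) Y := by
  by_cases hY : m s ∈ Y
  · rw [sum_eq_single_of_mem (Y.erase (m s)) (by simp [hY]),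
      ← subsetProb_plantedDensity_insert hm (notMem_erase _ _), insert_erase hY]
    intro X hX hne
    refine subsetProb_plantedDensity_eq_zero_of_marked_mem hm le_rfl (of_not_not fun hmX => ?_)
    exact hne (by rw [← (mem_filter.1 hX).2, erase_insert hmX])
  · have hempty (X : Finset U) : insert (m s) X ≠ Y := fun h => hY (h ▸ mem_insert_self _ _)
    simp only [hempty, filter_false, sum_empty]
    by_contra h0
    exact hY (marked_mem_of_subsetProb_plantedDensity_ne_zero hm (Nat.lt_succ_self _) (Ne.symm h0))

theorem prod_ite_marked (hm : ∀ s, part (m s) = s) (g : Fin T → ℝ) :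
    ∏ x, (if m (part x) = x then g (part x) else 1) = ∏ s, g s := by
  refine (Fintype.prod_of_injective m (Function.LeftInverse.injective hm) _ _ ?_ ?_).symm
  · exact fun x hx => if_neg fun h => hx ⟨part x, h⟩
  · simp [hm]

/-- Passing to the planted distribution divides the probability of `X` by a factor `q s` for each
planted class `s`, and by at most `1 - q s ≥ 1 / 2` for every other class. -/
theorem subsetProb_plantedDensity_mul_le (hm : ∀ s, part (m s) = s) (hq₀ : ∀ s, 0 < q s)
    (hq : ∀ s, q s ≤ 1 / 2) (t : ℕ) (X : Finset U) :
    subsetProb (plantedDensity part q m t) X * ∏ s ∈ {s : Fin T | (s : ℕ) < t}, q s ≤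
      2 ^ T * subsetProb (fun x => q (part x)) X := by
  have htwo : (2 : ℝ) ^ T = ∏ _s : Fin T, 2 := by simp
  rw [htwo, prod_filter, ← prod_ite_marked hm, ← prod_ite_marked hm, subsetProb, subsetProb,
    ← prod_mul_distrib, ← prod_mul_distrib]
  refine prod_le_prod (fun x _ => ?_) fun x _ => ?_ <;>
  · have := hq₀ (part x)
    have := hq (part x)
    unfold plantedDensity
    split_ifs <;> linarith

end PlantedDensity

/-! ### Staged schemes -/

/-- A scheme for building a learning graph out of candidates `u : U` divided into classes
`0, …, T - 1`. The graph loads a random set of candidates, of density `q s` in class `s`, and then,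
class by class, one further candidate; on a positive input `y` the candidate added in class `s` is
`mark y s`. The variables queried once the candidates in `X` are loaded are `load X`. -/
structure StagedScheme {ι : Type} (D : Set (ι → Bool)) (f : (ι → Bool) → Bool)
    (U : Type) (T : ℕ) where
  part : U → Fin T
  q : Fin T → ℝ
  q_pos : ∀ s, 0 < q s
  q_le_half : ∀ s, q s ≤ 1 / 2
  load : Finset U → Finset ι
  load_mono : Monotone load
  mark : (ι → Bool) → Fin T → U
  part_mark : ∀ y s, part (mark y s) = s
  certifies : ∀ y ∈ D, f y = true → ∀ X, (∀ s, mark y s ∈ X) →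
    ∀ z ∈ D, (∀ i ∈ load X, z i = y i) → f z = true

namespace StagedScheme

variable {ι : Type} {D : Set (ι → Bool)} {f : (ι → Bool) → Bool} {U : Type} {T : ℕ}

section Density

variable (P : StagedScheme D f U T)

/-- The probability with which a candidate is loaded at the start. -/
def density (u : U) : ℝ := P.q (P.part u)

theorem density_pos (u : U) : 0 < P.density u := P.q_pos _

theorem density_lt_one (u : U) : P.density u < 1 := (P.q_le_half _).trans_lt one_half_lt_one

theorem prod_q_pos (t : ℕ) : 0 < ∏ s ∈ {s : Fin T | (s : ℕ) < t}, P.q s :=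
  prod_pos fun s _ => P.q_pos s

variable [DecidableEq U]

/-- The probability, under the flow for `y`, with which a candidate is loaded after `t` stages. -/
def planted (y : ι → Bool) (t : ℕ) : U → ℝ :=
  plantedDensity P.part P.q (P.mark y) t

theorem planted_nonneg (y : ι → Bool) (t : ℕ) (u : U) : 0 ≤ P.planted y t u :=
  plantedDensity_nonneg (fun s => (P.q_pos s).le) t u

theorem planted_le_one (y : ι → Bool) (t : ℕ) (u : U) : P.planted y t u ≤ 1 :=
  plantedDensity_le_one (fun s => (P.q_le_half s).trans one_half_lt_one.le) t u

/-- The number of variables queried when `u` is loaded on top of `X`. -/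
def newLoad [DecidableEq ι] (u : U) (X : Finset U) : ℕ := #(P.load (insert u X) \ P.load X)

theorem newLoad_eq_zero [DecidableEq ι] {u : U} {X : Finset U} (hu : u ∈ X) :
    P.newLoad u X = 0 := by
  simp [newLoad, insert_eq_of_mem hu]

variable [Fintype U]

theorem subsetProb_density_pos (X : Finset U) : 0 < subsetProb P.density X :=
  subsetProb_pos P.density_pos P.density_lt_one X

theorem subsetProb_planted_nonneg (y : ι → Bool) (t : ℕ) (X : Finset U) :
    0 ≤ subsetProb (P.planted y t) X :=
  subsetProb_nonneg (P.planted_nonneg y t) (P.planted_le_one y t) X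

end Density

section Arcs

/-- The vertices: a root, and for each stage the sets of candidates loaded so far. -/
abbrev Vertex (U : Type) (T : ℕ) : Type := Option (Fin (T + 1) × Finset U)

/-- The arcs: from the root to an initial set of candidates, or adding one more candidate. -/
abbrev Arc (U : Type) : Type := Finset U ⊕ {p : Finset U × U // p.2 ∉ p.1}

variable [DecidableEq U]

/-- The tail of an arc. -/
def src (part : U → Fin T) : Arc U → Vertex U T :=
  Sum.elim (fun _ => none) fun p => some ((part p.1.2).castSucc, p.1.1)

/-- The head of an arc. -/
def tgt (part : U → Fin T) : Arc U → Vertex U T :=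
  Sum.elim (fun X => some (0, X)) fun p => some ((part p.1.2).succ, insert p.1.2 p.1.1)

theorem arc_injective (part : U → Fin T) :
    Function.Injective fun a => (src part a, tgt part a) := by
  rintro (X | ⟨⟨X, u⟩, hu⟩) (Y | ⟨⟨Y, v⟩, hv⟩) h
  · simpa [tgt, src] using h
  · simp [src] at h
  · simp [src] at h
  · simp only [src, tgt, Sum.elim_inr, Prod.mk.injEq, Option.some.injEq] at h
    obtain ⟨⟨-, rfl⟩, -, hins⟩ := h
    obtain rfl := (insert_inj hu).1 hins
    rfl

variable [Fintype U]

theorem sum_addition (g : Finset U → U → ℝ) (hg : ∀ X, ∀ u ∈ X, g X u = 0) :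
    ∑ p : {p : Finset U × U // p.2 ∉ p.1}, g p.1.1 p.1.2 = ∑ u, ∑ X, g X u := by
  rw [← sum_subtype ({p : Finset U × U | p.2 ∉ p.1} : Finset _) (by simp)
    (fun p : Finset U × U => g p.1 p.2), sum_comm, ← Fintype.sum_prod_type']
  exact sum_filter_of_ne fun p _ hp hmem => hp (hg _ _ hmem)

theorem sum_marked_addition {part : U → Fin T} {m : Fin T → U} (hm : ∀ s, part (m s) = s)
    (g : Finset U → U → ℝ) (hg : ∀ X, ∀ u ∈ X, g X u = 0)
    (hg' : ∀ X u, m (part u) ≠ u → g X u = 0) :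
    ∑ p : {p : Finset U × U // p.2 ∉ p.1}, g p.1.1 p.1.2 = ∑ s, ∑ X, g X (m s) := by
  rw [sum_addition g hg]
  refine (Fintype.sum_of_injective m (Function.LeftInverse.injective hm) _ _ ?_ fun _ => rfl).symm
  exact fun u hu => sum_eq_zero fun X _ => hg' X u fun h => hu ⟨_, h⟩

end Arcs

section Flow

variable [DecidableEq U] [Fintype U] (P : StagedScheme D f U T)

/-- The amount of flow for `y` that adds `u` to the set `X` of loaded candidates. -/
def addFlow (y : ι → Bool) (X : Finset U) (u : U) : ℝ :=
  if P.mark y (P.part u) = u then subsetProb (P.planted y (P.part u)) X else 0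

/-- The flow for `y`: the candidates are loaded as in the initial random set, conditioned on
containing none of the `mark y s`, which are then added one by one. -/
def flow (y : ι → Bool) : Arc U → ℝ :=
  Sum.elim (fun X => subsetProb (P.planted y 0) X) fun p => P.addFlow y p.1.1 p.1.2

theorem addFlow_of_ne {y : ι → Bool} {u : U} (h : P.mark y (P.part u) ≠ u) (X : Finset U) :
    P.addFlow y X u = 0 :=
  if_neg h

theorem addFlow_mark (y : ι → Bool) (X : Finset U) (s : Fin T) :
    P.addFlow y X (P.mark y s) = subsetProb (P.planted y s) X := by
  simp [addFlow, P.part_mark]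

theorem addFlow_of_mem (y : ι → Bool) {X : Finset U} {u : U} (h : u ∈ X) :
    P.addFlow y X u = 0 := by
  unfold addFlow
  split_ifs with hu
  · exact subsetProb_plantedDensity_eq_zero_of_marked_mem (P.part_mark y) le_rfl (hu.symm ▸ h)
  · rfl

theorem sum_addFlow (y : ι → Bool) (A : Finset U → U → Prop) [∀ X u, Decidable (A X u)] :
    ∑ p : {p : Finset U × U // p.2 ∉ p.1}, (if A p.1.1 p.1.2 then P.addFlow y p.1.1 p.1.2 else 0) =
      ∑ s, ∑ X, if A X (P.mark y s) then subsetProb (P.planted y s) X else 0 := by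
  rw [sum_marked_addition (P.part_mark y) fun X u => if A X u then P.addFlow y X u else 0]
  · simp only [addFlow_mark]
  · exact fun X u hu => by simp [P.addFlow_of_mem y hu]
  · exact fun X u hu => by simp [P.addFlow_of_ne hu]

theorem sum_flow_src_none (y : ι → Bool) :
    ∑ a with src P.part a = none, P.flow y a = 1 := by
  rw [sum_filter, Fintype.sum_sum_type]
  simp [src, flow, sum_subsetProb]

theorem sum_flow_tgt_none (y : ι → Bool) :
    ∑ a with tgt P.part a = none, P.flow y a = 0 := by
  rw [sum_filter, Fintype.sum_sum_type]
  simp [tgt]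

theorem sum_flow_src_castSucc (y : ι → Bool) (t : Fin T) (X : Finset U) :
    ∑ a with src P.part a = some (t.castSucc, X), P.flow y a = subsetProb (P.planted y t) X := by
  rw [sum_filter, Fintype.sum_sum_type]
  simp only [src, flow, Sum.elim_inl, Sum.elim_inr, reduceCtorEq, if_false, sum_const_zero,
    zero_add, Option.some.injEq, Prod.mk.injEq,
    P.sum_addFlow y fun Y u => (P.part u).castSucc = t.castSucc ∧ Y = X, P.part_mark]
  simp [ite_and]

theorem sum_flow_src_last (y : ι → Bool) (X : Finset U) :
    ∑ a with src P.part a = some (Fin.last T, X), P.flow y a = 0 := by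
  rw [sum_filter, Fintype.sum_sum_type]
  simp [src, Fin.castSucc_ne_last]

theorem sum_flow_tgt (y : ι → Bool) (t : Fin (T + 1)) (X : Finset U) :
    ∑ a with tgt P.part a = some (t, X), P.flow y a = subsetProb (P.planted y t) X := by
  rw [sum_filter, Fintype.sum_sum_type]
  simp only [tgt, flow, Sum.elim_inl, Sum.elim_inr, Option.some.injEq, Prod.mk.injEq,
    P.sum_addFlow y fun Y u => (P.part u).succ = t ∧ insert u Y = X, P.part_mark]
  obtain rfl | ⟨s, rfl⟩ := t.eq_zero_or_eq_succ
  · simp [Fin.succ_ne_zero]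
  · have hs : ∑ Y with insert (P.mark y s) Y = X, subsetProb (P.planted y s) Y =
        subsetProb (P.planted y (s + 1)) X :=
      sum_subsetProb_plantedDensity_insert_eq (P.part_mark y) s X
    rw [sum_filter] at hs
    simpa [ite_and, (Fin.succ_ne_zero s).symm] using hs

theorem planted_flow_conserved_or_certified {y : ι → Bool} (hyD : y ∈ D) (hy : f y = true)
    (t : Fin (T + 1)) (X : Finset U) :
    ∑ a with tgt P.part a = some (t, X), P.flow y a -
        ∑ a with src P.part a = some (t, X), P.flow y a = 0 ∨
      0 < ∑ a with tgt P.part a = some (t, X), P.flow y a -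
        ∑ a with src P.part a = some (t, X), P.flow y a ∧
          ∀ z ∈ D, (∀ i ∈ P.load X, z i = y i) → f z = true := by
  rw [sum_flow_tgt]
  obtain ⟨s, rfl⟩ | rfl := t.eq_castSucc_or_eq_last
  · exact .inl (by simp [sum_flow_src_castSucc])
  · rw [sum_flow_src_last, sub_zero]
    refine (P.subsetProb_planted_nonneg y _ X).eq_or_lt.imp Eq.symm fun hpos => ⟨hpos, ?_⟩
    exact P.certifies y hyD hy X fun s =>
      marked_mem_of_subsetProb_plantedDensity_ne_zero (P.part_mark y) s.2 hpos.ne'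

theorem energy_le (y : ι → Bool) (t : ℕ) (X : Finset U) {n l : ℝ} (hn : 0 ≤ n) (hl : 0 < l) :
    n * subsetProb (P.planted y t) X ^ 2 / (l * subsetProb P.density X) ≤
      2 ^ T / (l * ∏ s ∈ {s : Fin T | (s : ℕ) < t}, P.q s) *
        (subsetProb (P.planted y t) X * n) := by
  have hprod := P.prod_q_pos t
  have hdens := P.subsetProb_density_pos X
  have hplant := P.subsetProb_planted_nonneg y t X
  have hle := subsetProb_plantedDensity_mul_le (P.part_mark y) P.q_pos P.q_le_half t X
  rw [div_mul_eq_mul_div, div_le_div_iff₀ (by positivity) (by positivity)]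
  calc _ = n * subsetProb (P.planted y t) X * l *
          (subsetProb (P.planted y t) X * ∏ s ∈ {s : Fin T | (s : ℕ) < t}, P.q s) := by ring
    _ ≤ n * subsetProb (P.planted y t) X * l * (2 ^ T * subsetProb P.density X) :=
        mul_le_mul_of_nonneg_left hle (by positivity)
    _ = _ := by ring

end Flow

section Complexity

variable [DecidableEq ι] [DecidableEq U] [Fintype U] (P : StagedScheme D f U T)

/-- The learning graph of the scheme, where the arcs out of the root have total weight `w₀` and
those adding `u` have total weight `w (part u)`. -/
def arcPresentation {w₀ : ℝ} (hw₀ : 0 < w₀) {w : Fin T → ℝ} (hw : ∀ s, 0 < w s) :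
    ArcPresentation D f (Vertex U T) (Arc U) where
  root := none
  src := src P.part
  tgt := tgt P.part
  arc_injective := arc_injective P.part
  rank v := v.elim 0 fun p => p.1 + 1
  rank_lt := by rintro (X | p) <;> simp [src, tgt]
  S v := v.elim ∅ fun p => P.load p.2
  S_root := rfl
  S_mono := by
    rintro (X | p)
    exacts [empty_subset _, P.load_mono (subset_insert _ _)]
  w := Sum.elim (fun X => w₀ * subsetProb P.density X)
    fun p => w (P.part p.1.2) * subsetProb P.density p.1.1
  w_pos := by
    rintro (X | p)
    exacts [mul_pos hw₀ (P.subsetProb_density_pos X),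
      mul_pos (hw _) (P.subsetProb_density_pos p.1.1)]
  p := P.flow
  flow_root y _ _ := by rw [sum_flow_src_none, sum_flow_tgt_none, sub_zero]
  flow_cons y hyD hy v hv := by
    obtain ⟨⟨t, X⟩, rfl⟩ := Option.ne_none_iff_exists'.1 hv
    exact P.planted_flow_conserved_or_certified hyD hy t X

variable {w₀ : ℝ} {hw₀ : 0 < w₀} {w : Fin T → ℝ} {hw : ∀ s, 0 < w s}

theorem sum_len_mul_w :
    ∑ a, ((P.arcPresentation hw₀ hw).len a : ℝ) * (P.arcPresentation hw₀ hw).w a =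
      w₀ * subsetMean P.density (fun X => #(P.load X)) +
        ∑ s, w s * subsetMean P.density fun X => ∑ u with P.part u = s, (P.newLoad u X : ℝ) := by
  rw [Fintype.sum_sum_type]
  congr 1
  · rw [subsetMean, mul_sum]
    refine sum_congr rfl fun X _ => ?_
    simp only [arcPresentation, ArcPresentation.len, src, tgt, Sum.elim_inl, Option.elim_none,
      Option.elim_some, sdiff_empty]
    ring
  · calc _ = ∑ u, ∑ X, (P.newLoad u X : ℝ) * (w (P.part u) * subsetProb P.density X) :=
          sum_addition (fun X u => (P.newLoad u X : ℝ) * (w (P.part u) * subsetProb P.density X))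
            fun X u hu => by simp [P.newLoad_eq_zero hu]
      _ = _ := by
          rw [← sum_fiberwise univ P.part]
          refine sum_congr rfl fun s _ => ?_
          simp only [subsetMean, mul_sum]
          rw [sum_comm]
          refine sum_congr rfl fun X _ => sum_congr rfl fun u hu => ?_
          rw [(mem_filter.1 hu).2]
          ring

theorem sum_len_mul_flow_sq_div_w_le (y : ι → Bool) :
    ∑ a, ((P.arcPresentation hw₀ hw).len a : ℝ) * (P.arcPresentation hw₀ hw).p y a ^ 2 /
        (P.arcPresentation hw₀ hw).w a ≤
      2 ^ T / w₀ * subsetMean (P.planted y 0) (fun X => #(P.load X)) +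
        ∑ s : Fin T, 2 ^ T / (w s * ∏ s' ∈ {s' : Fin T | s' < s}, P.q s') *
          subsetMean (P.planted y s) fun X => P.newLoad (P.mark y s) X := by
  rw [Fintype.sum_sum_type]
  refine add_le_add ?_ ?_
  · rw [subsetMean, mul_sum]
    refine sum_le_sum fun X _ => ?_
    simpa [arcPresentation, ArcPresentation.len, src, tgt, flow] using
      P.energy_le y 0 X (Nat.cast_nonneg #(P.load X)) hw₀
  · calc _ = ∑ s, ∑ X, (P.newLoad (P.mark y s) X : ℝ) * P.addFlow y X (P.mark y s) ^ 2 /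
            (w (P.part (P.mark y s)) * subsetProb P.density X) :=
          sum_marked_addition (P.part_mark y) (fun X u => (P.newLoad u X : ℝ) *
            P.addFlow y X u ^ 2 / (w (P.part u) * subsetProb P.density X))
            (fun X u hu => by simp [P.newLoad_eq_zero hu])
            fun X u hu => by simp [P.addFlow_of_ne hu]
      _ ≤ _ := by
          refine sum_le_sum fun s _ => ?_
          rw [subsetMean, mul_sum]
          refine sum_le_sum fun X _ => ?_
          rw [addFlow_mark, P.part_mark]
          exact P.energy_le y s X (Nat.cast_nonneg _) (hw s)

theorem div_balanced_weight_mul_le {B C α β r M : ℝ} (hB : 0 < B) (hC : 0 ≤ C) (hα : 0 < α)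
    (hr : 0 < r) (hM : M ≤ β) (hαβ : α * β ≤ B ^ 2 * r) : C / (B / α * r) * M ≤ C * B := by
  calc _ ≤ C / (B / α * r) * β := by gcongr
    _ = C * (α * β / (B * r)) := by field_simp
    _ ≤ C * B := by
        gcongr
        rw [div_le_iff₀ (by positivity), ← mul_assoc, ← sq]
        exact hαβ

theorem exists_complexity_le [Fintype ι] {B α₀ β₀ : ℝ} {α β : Fin T → ℝ} (hB : 0 < B)
    (hα₀ : 0 < α₀) (hα : ∀ s, 0 < α s)
    (hroot : subsetMean P.density (fun X => (#(P.load X) : ℝ)) ≤ α₀)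
    (hstage : ∀ s,
      subsetMean P.density (fun X => ∑ u with P.part u = s, (P.newLoad u X : ℝ)) ≤ α s)
    (hroot' : ∀ y ∈ D, f y = true →
      subsetMean (P.planted y 0) (fun X => (#(P.load X) : ℝ)) ≤ β₀)
    (hstage' : ∀ y ∈ D, f y = true → ∀ s : Fin T,
      subsetMean (P.planted y s) (fun X => (P.newLoad (P.mark y s) X : ℝ)) ≤ β s)
    (hαβ₀ : α₀ * β₀ ≤ B ^ 2)
    (hαβ : ∀ s, α s * β s ≤ B ^ 2 * ∏ s' ∈ {s' : Fin T | s' < s}, P.q s') :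
    ∃ G : LearningGraph D f, G.complexity ≤ (T + 1) * 2 ^ T * B := by
  have hw₀ : 0 < B / α₀ := div_pos hB hα₀
  have hw (s : Fin T) : 0 < B / α s := div_pos hB (hα s)
  have hone : (1 : ℝ) ≤ 2 ^ T := one_le_pow₀ one_le_two
  refine ⟨_, ((P.arcPresentation hw₀ hw).complexity_toLearningGraph_le
    (K₀ := (T + 1) * B) (K₁ := (T + 1) * 2 ^ T * B) (by positivity) (by positivity) ?_
      fun y hyD hy => ?_).trans ?_⟩
  · rw [sum_len_mul_w]
    calc _ ≤ B / α₀ * α₀ + ∑ s, B / α s * α s :=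
          add_le_add (mul_le_mul_of_nonneg_left hroot hw₀.le)
            (sum_le_sum fun s _ => mul_le_mul_of_nonneg_left (hstage s) (hw s).le)
      _ = B + ∑ _s : Fin T, B := by simp only [div_mul_cancel₀, hα₀.ne', (hα _).ne', ne_eq,
          not_false_eq_true]
      _ = (T + 1) * B := by simp; ring
  · calc _ ≤ _ := P.sum_len_mul_flow_sq_div_w_le y
      _ ≤ 2 ^ T * B + ∑ _s : Fin T, 2 ^ T * B := by
          refine add_le_add ?_ (sum_le_sum fun s _ => ?_)
          · simpa using div_balanced_weight_mul_le (r := 1) hB (zero_le_one.trans hone) hα₀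
              one_pos (hroot' y hyD hy) (by simpa using hαβ₀)
          · exact div_balanced_weight_mul_le hB (zero_le_one.trans hone) (hα s)
              (prod_pos fun s' _ => P.q_pos s') (hstage' y hyD hy s) (hαβ s)
      _ = (T + 1) * 2 ^ T * B := by simp; ring
  · refine Real.sqrt_le_iff.2 ⟨by positivity, ?_⟩
    calc _ = ((T + 1) * B) ^ 2 * (2 ^ T * 1) := by ring
      _ ≤ ((T + 1) * B) ^ 2 * (2 ^ T * 2 ^ T) := by gcongr
      _ = _ := by ring

end Complexity

end StagedScheme

/-! ### Gadgets -/

section Gadgets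

variable {U Γ ι : Type*} [DecidableEq U] [Fintype Γ] [DecidableEq ι]
  {need : Γ → Finset U} {slot : Γ → Finset ι}

/-- The variables queried by a family of gadgets when the elements of `X` are available: the
gadget `g` queries `slot g` as soon as all of `need g` is available. -/
def loaded (need : Γ → Finset U) (slot : Γ → Finset ι) (X : Finset U) : Finset ι :=
  ({g | need g ⊆ X} : Finset Γ).biUnion slot

theorem loaded_mono : Monotone (loaded need slot) := fun _ _ hXY =>
  biUnion_subset_biUnion_of_subset_left _ <|
    monotone_filter_right _ fun _ _ hg => hg.trans hXY

theorem loaded_insert_sdiff_subset (u : U) (X : Finset U) :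
    loaded need slot (insert u X) \ loaded need slot X ⊆
      ({g | u ∈ need g ∧ (need g).erase u ⊆ X} : Finset Γ).biUnion slot := by
  intro i hi
  simp only [loaded, mem_sdiff, mem_biUnion, mem_filter, mem_univ, true_and, not_exists,
    not_and] at hi ⊢
  obtain ⟨⟨g, hg, hgi⟩, hnew⟩ := hi
  have hu : u ∈ need g := by
    by_contra hu
    exact hnew g ((subset_insert_iff_of_notMem hu).1 hg) hgi
  exact ⟨g, ⟨hu, subset_insert_iff.1 hg⟩, hgi⟩

variable [Fintype U] {q : U → ℝ}

theorem subsetMean_card_loaded_le (hslot : ∀ g, #(slot g) ≤ 1) (h₀ : ∀ x, 0 ≤ q x)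
    (h₁ : ∀ x, q x ≤ 1) :
    subsetMean q (fun X => (#(loaded need slot X) : ℝ)) ≤ ∑ g, ∏ z ∈ need g, q z := by
  simp only [← subsetMean_subset, ← subsetMean_sum]
  refine subsetMean_mono h₀ h₁ fun X => ?_
  rw [sum_boole]
  exact_mod_cast (card_biUnion_le_card_mul _ _ 1 fun g _ => hslot g).trans_eq (mul_one _)

theorem subsetMean_card_loaded_insert_sdiff_le (hslot : ∀ g, #(slot g) ≤ 1) (h₀ : ∀ x, 0 ≤ q x)
    (h₁ : ∀ x, q x ≤ 1) (u : U) :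
    subsetMean q (fun X => (#(loaded need slot (insert u X) \ loaded need slot X) : ℝ)) ≤
      ∑ g with u ∈ need g, ∏ z ∈ (need g).erase u, q z := by
  simp only [← subsetMean_subset, ← subsetMean_sum]
  refine subsetMean_mono h₀ h₁ fun X => ?_
  rw [sum_boole, filter_filter]
  refine Nat.cast_le.2 ((card_le_card (loaded_insert_sdiff_subset u X)).trans ?_)
  exact (card_biUnion_le_card_mul _ _ 1 fun g _ => hslot g).trans_eq (mul_one _)

end Gadgets

/-! ### Placements of the elements of a graph -/

section Placements

variable {V : Type} {H : SimpleGraph V} {n : ℕ}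

/-- The elements of a graph: its vertices and its edges. -/
abbrev GraphElement (H : SimpleGraph V) : Type := V ⊕ H.edgeSet

/-- The first end of an edge, for an arbitrary orientation of `H`. -/
noncomputable def edgeTail (e : H.edgeSet) : V := (Quot.out e.1).1

/-- The second end of an edge, for the same orientation as `edgeTail`. -/
noncomputable def edgeHead (e : H.edgeSet) : V := (Quot.out e.1).2

theorem mk_edgeTail_edgeHead (e : H.edgeSet) : s(edgeTail e, edgeHead e) = e.1 := Quot.out_eq e.1

theorem edgeTail_ne_edgeHead (e : H.edgeSet) : edgeTail e ≠ edgeHead e :=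
  H.ne_of_adj <| by rw [← H.mem_edgeSet, mk_edgeTail_edgeHead]; exact e.2

/-- The possible placements of the edges of `H` in `Fin n`: an edge together with the positions of
its first and of its second end. -/
abbrev EdgePlacement (H : SimpleGraph V) (n : ℕ) : Type := H.edgeSet × Fin n × Fin n

/-- The possible placements of the elements of `H` in `Fin n`. -/
abbrev Candidate (H : SimpleGraph V) (n : ℕ) : Type := (V × Fin n) ⊕ EdgePlacement H n

/-- The element of `H` that a candidate places. -/
def elementOf : Candidate H n → GraphElement H := Sum.map Prod.fst Prod.fst

/-- The candidate placing an element of `H` where the vertex map `φ` sends it. -/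
noncomputable def candidateAt (φ : V → Fin n) : GraphElement H → Candidate H n :=
  Sum.map (fun i => (i, φ i)) fun e => (e, φ (edgeTail e), φ (edgeHead e))

@[simp]
theorem elementOf_candidateAt (φ : V → Fin n) (c : GraphElement H) :
    elementOf (candidateAt φ c) = c := by
  cases c <;> rfl

/-- The variable telling whether two given positions are adjacent; none if they coincide. -/
def adjacencySlot (p : Fin n × Fin n) : Finset (EdgeSlot n) := {q | s(q.1.1, q.1.2) = s(p.1, p.2)}

theorem card_adjacencySlot_le_one (p : Fin n × Fin n) : #(adjacencySlot p) ≤ 1 := by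
  rw [card_le_one]
  rintro ⟨⟨a, b⟩, hab⟩ h ⟨⟨c, d⟩, hcd⟩ h'
  have heq : s(a, b) = s(c, d) := (mem_filter.1 h).2.trans (mem_filter.1 h').2.symm
  obtain ⟨rfl, rfl⟩ | ⟨rfl, rfl⟩ := Sym2.eq_iff.1 heq
  · rfl
  · exact absurd hab hcd.asymm

theorem card_elementOf_eq_inl_le [Fintype V] [DecidableEq V] [Fintype H.edgeSet] (i : V) :
    #{u : Candidate H n | elementOf u = .inl i} ≤ n := by
  calc _ ≤ #(univ.image fun a : Fin n => (.inl (i, a) : Candidate H n)) := by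
        refine card_le_card fun u hu => ?_
        have hu := (mem_filter.1 hu).2
        obtain ⟨j, a⟩ | g := u <;> simp_all [elementOf]
    _ ≤ n := card_image_le.trans_eq (by simp)

theorem card_elementOf_eq_inr_le [Fintype V] [DecidableEq V] [Fintype H.edgeSet]
    (e : H.edgeSet) : #{u : Candidate H n | elementOf u = .inr e} ≤ n * n := by
  calc _ ≤ #(univ.image fun p : Fin n × Fin n => (.inr (e, p) : Candidate H n)) := by
        refine card_le_card fun u hu => ?_
        have hu := (mem_filter.1 hu).2
        obtain p | ⟨e', p⟩ := u <;> simp_all [elementOf]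
    _ ≤ n * n := card_image_le.trans_eq (by simp)

variable [DecidableEq V]

/-- The candidates that must be available for an edge placement to be queried: those placing the
edge and its two ends. -/
noncomputable def required (g : EdgePlacement H n) : Finset (Candidate H n) :=
  {.inl (edgeTail g.1, g.2.1), .inl (edgeHead g.1, g.2.2), .inr g}

theorem erase_required_edgeTail (g : EdgePlacement H n) :
    (required g).erase (.inl (edgeTail g.1, g.2.1)) = {.inl (edgeHead g.1, g.2.2), .inr g} :=
  erase_insert (by simp [edgeTail_ne_edgeHead])

theorem erase_required_edgeHead (g : EdgePlacement H n) :
    (required g).erase (.inl (edgeHead g.1, g.2.2)) = {.inl (edgeTail g.1, g.2.1), .inr g} := by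
  rw [required, insert_comm]
  exact erase_insert (by simp [(edgeTail_ne_edgeHead g.1).symm])

theorem erase_required_inr (g : EdgePlacement H n) :
    (required g).erase (.inr g) = {.inl (edgeTail g.1, g.2.1), .inl (edgeHead g.1, g.2.2)} := by
  ext z
  simp only [required, mem_erase, mem_insert, mem_singleton]
  grind

theorem prod_required (Q : Candidate H n → ℝ) (g : EdgePlacement H n) :
    ∏ z ∈ required g, Q z =
      Q (.inl (edgeTail g.1, g.2.1)) * (Q (.inl (edgeHead g.1, g.2.2)) * Q (.inr g)) := by
  rw [required, prod_insert (by simp [edgeTail_ne_edgeHead]), prod_pair (by simp)]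

theorem inl_mem_required {i : V} {a : Fin n} {g : EdgePlacement H n} :
    .inl (i, a) ∈ required g ↔ edgeTail g.1 = i ∧ g.2.1 = a ∨ edgeHead g.1 = i ∧ g.2.2 = a := by
  simp [required, eq_comm]

theorem inr_mem_required {g g' : EdgePlacement H n} : .inr g ∈ required g' ↔ g' = g := by
  simp [required, eq_comm]

theorem card_inl_mem_required_le [Fintype H.edgeSet] (i : V) (a : Fin n) :
    #{g : EdgePlacement H n | .inl (i, a) ∈ required g} ≤ Fintype.card H.edgeSet * n := by
  let otherEnd (g : EdgePlacement H n) : H.edgeSet × Fin n :=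
    (g.1, if edgeTail g.1 = i then g.2.2 else g.2.1)
  have hinj : Set.InjOn otherEnd {g : EdgePlacement H n | .inl (i, a) ∈ required g} := by
    rintro ⟨e, b, c⟩ h ⟨e', b', c'⟩ h' heq
    obtain rfl : e = e' := congr_arg Prod.fst heq
    have hne := edgeTail_ne_edgeHead e
    simp only [Set.mem_ofPred_eq, inl_mem_required] at h h'
    simp only [otherEnd, Prod.mk.injEq, true_and] at heq
    grind
  calc _ ≤ #(univ : Finset (H.edgeSet × Fin n)) :=
        card_le_card_of_injOn otherEnd (fun _ _ => mem_univ _) (by simpa using hinj)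
    _ = _ := by simp

variable [Fintype H.edgeSet] {Q : Candidate H n → ℝ} {M : ℝ}

theorem sum_prod_erase_required_inl_le (hM : 0 ≤ M) {i : V} {a : Fin n}
    (htail : ∀ e, edgeTail e = i → ∀ b, Q (.inl (edgeHead e, b)) * Q (.inr (e, a, b)) ≤ M)
    (hhead : ∀ e, edgeHead e = i → ∀ b, Q (.inl (edgeTail e, b)) * Q (.inr (e, b, a)) ≤ M) :
    ∑ g with .inl (i, a) ∈ required g, ∏ z ∈ (required g).erase (.inl (i, a)), Q z ≤
      Fintype.card H.edgeSet * (n * M) := by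
  calc _ ≤ #{g : EdgePlacement H n | .inl (i, a) ∈ required g} • M := by
        refine sum_le_card_nsmul _ _ _ fun g hg => ?_
        obtain ⟨e, b, c⟩ := g
        obtain ⟨rfl, rfl⟩ | ⟨rfl, rfl⟩ := inl_mem_required.1 (mem_filter.1 hg).2
        · rw [erase_required_edgeTail (e, b, c), prod_pair (by simp)]
          exact htail e rfl c
        · rw [erase_required_edgeHead (e, b, c), prod_pair (by simp)]
          exact hhead e rfl b
    _ ≤ (Fintype.card H.edgeSet * n) • M := nsmul_le_nsmul_left hM (card_inl_mem_required_le i a)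
    _ = _ := by rw [nsmul_eq_mul]; push_cast; ring

theorem sum_prod_erase_required_inr (g : EdgePlacement H n) :
    ∑ g' with .inr g ∈ required g', ∏ z ∈ (required g').erase (.inr g), Q z =
      Q (.inl (edgeTail g.1, g.2.1)) * Q (.inl (edgeHead g.1, g.2.2)) := by
  simp only [inr_mem_required, filter_eq', mem_univ, if_true, sum_singleton]
  rw [erase_required_inr, prod_pair (by simp [edgeTail_ne_edgeHead])]

end Placements

section Query

variable {V : Type} [DecidableEq V] {H : SimpleGraph V} [Fintype H.edgeSet] {n : ℕ}

/-- The adjacencies queried when the candidates in `X` are loaded: those between the ends of the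
edge placements that are in `X` together with both their ends. -/
noncomputable def queried (X : Finset (Candidate H n)) : Finset (EdgeSlot n) :=
  loaded required (fun g => adjacencySlot g.2) X

theorem adjacencySlot_subset_queried {φ : V → Fin n} {X : Finset (Candidate H n)}
    (hX : ∀ c, candidateAt φ c ∈ X) (e : H.edgeSet) :
    adjacencySlot (φ (edgeTail e), φ (edgeHead e)) ⊆ queried X := by
  let g : EdgePlacement H n := (e, φ (edgeTail e), φ (edgeHead e))
  refine subset_biUnion_of_mem (u := fun g : EdgePlacement H n => adjacencySlot g.2) (x := g) ?_
  refine mem_filter.2 ⟨mem_univ _, ?_⟩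
  simp only [required, insert_subset_iff, singleton_subset_iff]
  exact ⟨hX (.inl (edgeTail e)), hX (.inl (edgeHead e)), hX (.inr e)⟩

end Query

section Copy

variable {k n : ℕ} (H : SimpleGraph (Fin k))

theorem subgraphFn_eq_true_iff_s1 {H : SimpleGraph (Fin k)} {y : EdgeSlot n → Bool} :
    subgraphFn H n y = true ↔ ∃ φ : Fin k ↪ Fin n,
      ∀ e : H.edgeSet, ∀ q ∈ adjacencySlot (φ (edgeTail e), φ (edgeHead e)), y q = true := by
  have hslot (q : EdgeSlot n) (a b : Fin n) : q.1.1 = a ∧ q.1.2 = b ∨ q.1.1 = b ∧ q.1.2 = a ↔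
      s(q.1.1, q.1.2) = s(a, b) := Sym2.eq_iff.symm
  have hfn : subgraphFn H n y = true ↔ HasHCopy H y := by simp [subgraphFn]
  simp only [hfn, HasHCopy, hslot, adjacencySlot, mem_filter, mem_univ, true_and]
  refine exists_congr fun φ => ⟨fun h e => h _ _ ?_, fun h i j hij => ?_⟩
  · rw [← H.mem_edgeSet, mk_edgeTail_edgeHead]
    exact e.2
  · have hends := congr_arg (Sym2.map φ) (mk_edgeTail_edgeHead ⟨s(i, j), hij⟩)
    simp only [Sym2.map_mk] at hends
    simpa only [hends] using h ⟨s(i, j), hij⟩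

open Classical in
/-- The vertex map of a copy of `H` in the graph `y`, if there is one. -/
noncomputable def copyMap [NeZero n] (y : EdgeSlot n → Bool) : Fin k → Fin n :=
  if h : ∃ φ : Fin k ↪ Fin n,
    ∀ e : H.edgeSet, ∀ q ∈ adjacencySlot (φ (edgeTail e), φ (edgeHead e)), y q = true
  then h.choose else 0

theorem copyMap_spec [NeZero n] {H : SimpleGraph (Fin k)} {y : EdgeSlot n → Bool}
    (hy : subgraphFn H n y = true) :
    (copyMap H y).Injective ∧ ∀ e : H.edgeSet,
      ∀ q ∈ adjacencySlot (copyMap H y (edgeTail e), copyMap H y (edgeHead e)), y q = true := by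
  have h := subgraphFn_eq_true_iff_s1.1 hy
  rw [copyMap, dif_pos h]
  exact ⟨h.choose.injective, h.choose_spec⟩

end Copy

theorem exists_equiv_fin_monotone {K : Type*} [Fintype K] (ph : K → ℕ) :
    ∃ σ : K ≃ Fin (Fintype.card K), Monotone (ph ∘ σ.symm) := by
  let e := Fintype.equivFin K
  exact ⟨e.trans (Tuple.sort (ph ∘ e.symm)).symm, Tuple.monotone_sort (ph ∘ e.symm)⟩

theorem mean_newlyQueried_inr_le {V : Type} [Fintype V] [DecidableEq V] {H : SimpleGraph V}
    [Fintype H.edgeSet] {n : ℕ} {Q : Candidate H n → ℝ} (h₀ : ∀ u, 0 ≤ Q u) (h₁ : ∀ u, Q u ≤ 1)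
    (g : EdgePlacement H n) :
    subsetMean Q (fun X => (#(queried (insert (.inr g) X) \ queried X) : ℝ)) ≤
      Q (.inl (edgeTail g.1, g.2.1)) * Q (.inl (edgeHead g.1, g.2.2)) := by
  calc _ ≤ ∑ g' with .inr g ∈ required g', ∏ z ∈ (required g').erase (.inr g), Q z :=
        subsetMean_card_loaded_insert_sdiff_le (fun g => card_adjacencySlot_le_one g.2) h₀ h₁ _
    _ = _ := sum_prod_erase_required_inr g

/-! ### Loading plans -/

/-- The exponents of a strategy for finding a copy of `H` in a graph on `n` vertices: the element
`c` of `H` is loaded initially with density `n ^ (-x c)`, and then planted in the order of the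
phases. The exponent `δ i` bounds the number of adjacencies, up to constant factors, that are
queried when the vertex `i` is planted. The inequalities say that the initial and the planting
stages of the learning graph all have complexity `O(n ^ b)`. -/
structure LoadingPlan {V : Type} [Fintype V] (H : SimpleGraph V) [Fintype H.edgeSet]
    (b : ℝ) where
  x : GraphElement H → ℝ
  x_nonneg : ∀ c, 0 ≤ x c
  phase : GraphElement H → ℕ
  phase_lt : ∀ e : H.edgeSet, ∀ i ∈ e.1, phase (.inl i) < phase (.inr e)
  δ : V → ℝ
  initial_le : ∀ (e : H.edgeSet) (i j : V), e.1 = s(i, j) →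
    2 - x (.inl i) - x (.inl j) - x (.inr e) ≤ b
  degree_le : ∀ (e : H.edgeSet) (i j : V), e.1 = s(i, j) → 1 - x (.inl j) - x (.inr e) ≤ δ i
  vertex_le : ∀ i, 1 + 2 * δ i + ∑ c with phase c ≤ phase (.inl i), x c ≤ 2 * b + x (.inl i)
  edge_le : ∀ (e : H.edgeSet) (i j : V), e.1 = s(i, j) →
    2 - x (.inl i) - x (.inl j) + ∑ c with phase c ≤ phase (.inr e), x c ≤ 2 * b + x (.inr e)

namespace LoadingPlan

section Order

variable {V : Type} [Fintype V] {H : SimpleGraph V} [Fintype H.edgeSet] {b : ℝ}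
  (P : LoadingPlan H b)

/-- A linear order of the elements of `H` refining their phases. -/
noncomputable def order : GraphElement H ≃ Fin (Fintype.card (GraphElement H)) :=
  (exists_equiv_fin_monotone P.phase).choose

theorem phase_le_phase {c c' : GraphElement H} (h : P.order c ≤ P.order c') :
    P.phase c ≤ P.phase c' := by
  have hmono : Monotone (P.phase ∘ P.order.symm) :=
    (exists_equiv_fin_monotone P.phase).choose_spec
  simpa using hmono h

theorem order_inl_lt_order_inr {e : H.edgeSet} {i : V} (hi : i ∈ e.1) :
    P.order (.inl i) < P.order (.inr e) :=
  lt_of_not_ge fun h => (P.phase_lt e i hi).not_ge (P.phase_le_phase h)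

theorem sum_order_lt_add_le (c : GraphElement H) :
    ∑ s with s < P.order c, P.x (P.order.symm s) + P.x c ≤
      ∑ c' with P.phase c' ≤ P.phase c, P.x c' := by
  classical
  have hsum : ∑ s with s < P.order c, P.x (P.order.symm s) =
      ∑ c' with P.order c' < P.order c, P.x c' := by
    rw [sum_filter, sum_filter]
    exact Fintype.sum_equiv P.order.symm _ _ (by simp)
  rw [hsum, add_comm, ← sum_insert (by simp)]
  refine sum_le_sum_of_subset_of_nonneg (fun c' hc' => ?_) fun c' _ _ => P.x_nonneg c'
  obtain rfl | h := mem_insert.1 hc'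
  · simp
  · simpa using P.phase_le_phase (mem_filter.1 h).2.le

/-- The density with which the placements of an element of `H` are loaded initially. -/
noncomputable def freq (n : ℕ) (c : GraphElement H) : ℝ := (n : ℝ) ^ (-P.x c)

variable {n : ℕ} [NeZero n]

theorem freq_pos (c : GraphElement H) : 0 < P.freq n c :=
  Real.rpow_pos_of_pos (Nat.cast_pos.2 (NeZero.pos n)) _

theorem freq_le_one (c : GraphElement H) : P.freq n c ≤ 1 :=
  Real.rpow_le_one_of_one_le_of_nonpos (Nat.one_le_cast.2 NeZero.one_le)
    (neg_nonpos.2 (P.x_nonneg c))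

theorem mul_freq_mul_freq_le {e : H.edgeSet} {i j : V} (he : e.1 = s(i, j)) :
    n * (P.freq n (.inl j) * P.freq n (.inr e)) ≤ (n : ℝ) ^ P.δ i := by
  have hn : (1 : ℝ) ≤ n := Nat.one_le_cast.2 NeZero.one_le
  calc _ = (n : ℝ) ^ (1 + (-P.x (.inl j) + -P.x (.inr e))) := by
        rw [Real.rpow_add (by linarith), Real.rpow_add (by linarith), Real.rpow_one, freq, freq]
    _ ≤ _ := Real.rpow_le_rpow_of_exponent_le hn (by linarith [P.degree_le e i j he])

theorem rpow_neg_sum_le_prod_freq (c : GraphElement H) :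
    (n : ℝ) ^ (-∑ s with s < P.order c, P.x (P.order.symm s)) ≤
      2 ^ Fintype.card (GraphElement H) *
        ∏ s with s < P.order c, P.freq n (P.order.symm s) / 2 := by
  have hn : (0 : ℝ) < n := Nat.cast_pos.2 (NeZero.pos n)
  have hprod := prod_pos fun s (_ : s ∈ ({s | s < P.order c} : Finset _)) =>
    P.freq_pos (n := n) (P.order.symm s)
  rw [← sum_neg_distrib, Real.rpow_sum_of_pos hn, prod_div_distrib, prod_const, mul_div_left_comm]
  refine le_mul_of_one_le_right hprod.le ((one_le_div (by positivity)).2 ?_)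
  exact pow_le_pow_right₀ one_le_two ((card_le_univ _).trans_eq (Fintype.card_fin _))

end Order

section Load

variable {V : Type} [Fintype V] [DecidableEq V] {H : SimpleGraph V} [Fintype H.edgeSet] {b : ℝ}
  (P : LoadingPlan H b) {n : ℕ} [NeZero n] {Q : Candidate H n → ℝ}

theorem mean_queried_le (h₀ : ∀ u, 0 ≤ Q u) (h₁ : ∀ u, Q u ≤ 1)
    (hQ : ∀ u, Q u ≤ P.freq n (elementOf u)) :
    subsetMean Q (fun X => (#(queried X) : ℝ)) ≤ Fintype.card H.edgeSet * (n : ℝ) ^ b := by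
  have hn : (1 : ℝ) ≤ n := Nat.one_le_cast.2 NeZero.one_le
  have hn₀ : (0 : ℝ) < n := by linarith
  have hgadget (g : EdgePlacement H n) : ∏ z ∈ required g, Q z ≤ (n : ℝ) ^ (b - 2) := by
    calc _ = Q (.inl (edgeTail g.1, g.2.1)) * (Q (.inl (edgeHead g.1, g.2.2)) * Q (.inr g)) :=
          prod_required Q g
      _ ≤ P.freq n (.inl (edgeTail g.1)) * (P.freq n (.inl (edgeHead g.1)) * P.freq n (.inr g.1)) :=
          mul_le_mul (hQ _) (mul_le_mul (hQ _) (hQ _) (h₀ _) (P.freq_pos _).le)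
            (mul_nonneg (h₀ _) (h₀ _)) (P.freq_pos _).le
      _ ≤ _ := by
          simp only [freq, ← Real.rpow_add hn₀]
          refine Real.rpow_le_rpow_of_exponent_le hn ?_
          linarith [P.initial_le g.1 _ _ (mk_edgeTail_edgeHead g.1).symm]
  calc _ ≤ ∑ g : EdgePlacement H n, ∏ z ∈ required g, Q z :=
        subsetMean_card_loaded_le (fun g => card_adjacencySlot_le_one g.2) h₀ h₁
    _ ≤ ∑ _g : EdgePlacement H n, (n : ℝ) ^ (b - 2) := sum_le_sum fun g _ => hgadget g
    _ = Fintype.card H.edgeSet * ((n : ℝ) ^ (2 : ℝ) * (n : ℝ) ^ (b - 2)) := by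
        simp; ring
    _ = _ := by rw [← Real.rpow_add hn₀, add_sub_cancel]

theorem mean_newlyQueried_inl_le (h₀ : ∀ u, 0 ≤ Q u) (h₁ : ∀ u, Q u ≤ 1) (i : V) (a : Fin n)
    (htail : ∀ e, edgeTail e = i → ∀ b, Q (.inl (edgeHead e, b)) * Q (.inr (e, a, b)) ≤
      P.freq n (.inl (edgeHead e)) * P.freq n (.inr e))
    (hhead : ∀ e, edgeHead e = i → ∀ b, Q (.inl (edgeTail e, b)) * Q (.inr (e, b, a)) ≤
      P.freq n (.inl (edgeTail e)) * P.freq n (.inr e)) :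
    subsetMean Q (fun X => (#(queried (insert (.inl (i, a)) X) \ queried X) : ℝ)) ≤
      Fintype.card H.edgeSet * (n : ℝ) ^ P.δ i := by
  have hn : (0 : ℝ) < n := Nat.cast_pos.2 (NeZero.pos n)
  calc _ ≤ ∑ g with .inl (i, a) ∈ required g, ∏ z ∈ (required g).erase (.inl (i, a)), Q z :=
        subsetMean_card_loaded_insert_sdiff_le (fun g => card_adjacencySlot_le_one g.2) h₀ h₁ _
    _ ≤ Fintype.card H.edgeSet * (n * ((n : ℝ) ^ P.δ i / n)) := by
        refine sum_prod_erase_required_inl_le (by positivity) (fun e he b => ?_) fun e he b => ?_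
        · refine (htail e he b).trans ((le_div_iff₀' hn).2 (P.mul_freq_mul_freq_le ?_))
          rw [← he, mk_edgeTail_edgeHead]
        · refine (hhead e he b).trans ((le_div_iff₀' hn).2 (P.mul_freq_mul_freq_le ?_))
          rw [← he, Sym2.eq_swap, mk_edgeTail_edgeHead]
    _ = _ := by rw [mul_div_cancel₀ _ hn.ne']

end Load

end LoadingPlan

namespace LoadingPlan

section Exponents

variable {V : Type} [Fintype V] {H : SimpleGraph V} [Fintype H.edgeSet] {b : ℝ}
  (P : LoadingPlan H b)

/-- The exponent of the expected number of adjacencies queried by loading all the placements of an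
element of `H`, each on its own. -/
noncomputable def totalExp : GraphElement H → ℝ :=
  Sum.elim (fun i => 1 + P.δ i) fun e => 2 - P.x (.inl (edgeTail e)) - P.x (.inl (edgeHead e))

/-- The exponent of the expected number of adjacencies queried by planting an element of `H`. -/
def markExp : GraphElement H → ℝ := Sum.elim P.δ 0

theorem totalExp_add_markExp_le (c : GraphElement H) :
    P.totalExp c + P.markExp c ≤
      b + b + -∑ s with s < P.order c, P.x (P.order.symm s) := by
  have horder := P.sum_order_lt_add_le c
  obtain i | e := c <;> simp only [totalExp, markExp, Sum.elim_inl, Sum.elim_inr, Pi.zero_apply]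
  · linarith [P.vertex_le i]
  · linarith [P.edge_le e _ _ (mk_edgeTail_edgeHead e).symm]

end Exponents

section Scheme

variable {k : ℕ} {H : SimpleGraph (Fin k)} [Fintype H.edgeSet] {b : ℝ} (P : LoadingPlan H b)
  (n : ℕ) [NeZero n]

/-- The scheme that loads the placements of the elements of `H` with densities proportional to
`freq`, and plants a copy of `H` element by element. The densities are halved to keep them away
from `1`. -/
noncomputable def scheme :
    StagedScheme Set.univ (subgraphFn H n) (Candidate H n) (Fintype.card (GraphElement H)) where
  part u := P.order (elementOf u)
  q s := P.freq n (P.order.symm s) / 2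
  q_pos s := half_pos (P.freq_pos _)
  q_le_half s := div_le_div_of_nonneg_right (P.freq_le_one _) zero_le_two
  load := queried
  load_mono := loaded_mono
  mark y s := candidateAt (copyMap H y) (P.order.symm s)
  part_mark y s := by simp
  certifies y _ hy X hX z _ hz := by
    obtain ⟨hinj, hcopy⟩ := copyMap_spec hy
    have hmem (c : GraphElement H) : candidateAt (copyMap H y) c ∈ X := by
      simpa using hX (P.order c)
    refine subgraphFn_eq_true_iff_s1.2 ⟨⟨_, hinj⟩, fun e i hi => ?_⟩
    rw [hz i (adjacencySlot_subset_queried hmem e hi)]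
    exact hcopy e i hi

variable {n}

theorem scheme_q_order_le (c : GraphElement H) : (P.scheme n).q (P.order c) ≤ P.freq n c := by
  have := P.freq_pos (n := n) c
  simp only [scheme, Equiv.symm_apply_apply]
  linarith

theorem scheme_density_le (u : Candidate H n) :
    (P.scheme n).density u ≤ P.freq n (elementOf u) :=
  P.scheme_q_order_le _

theorem scheme_mark_order (y : EdgeSlot n → Bool) (c : GraphElement H) :
    (P.scheme n).mark y (P.order c) = candidateAt (copyMap H y) c := by
  simp [scheme]

theorem scheme_planted_le {y : EdgeSlot n → Bool} {t : ℕ} {u : Candidate H n}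
    (hu : candidateAt (copyMap H y) (elementOf u) = u → t ≤ P.order (elementOf u)) :
    (P.scheme n).planted y t u ≤ P.freq n (elementOf u) := by
  refine (plantedDensity_le (part := (P.scheme n).part) (fun s => ((P.scheme n).q_pos s).le)
    fun hmark => hu ?_).trans (P.scheme_q_order_le _)
  rwa [← P.scheme_mark_order]

theorem scheme_planted_inr_eq_zero (y : EdgeSlot n → Bool) {t : ℕ} {e : H.edgeSet}
    (ht : t ≤ P.order (.inr e)) :
    (P.scheme n).planted y t
      (.inr (e, copyMap H y (edgeTail e), copyMap H y (edgeHead e))) = 0 := by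
  have hmark := plantedDensity_marked (q := (P.scheme n).q) ((P.scheme n).part_mark y) t
    (P.order (.inr e))
  rw [P.scheme_mark_order, if_neg ht.not_gt] at hmark
  exact hmark

theorem scheme_density_mul_density_le (u v : Candidate H n) :
    (P.scheme n).density u * (P.scheme n).density v ≤
      P.freq n (elementOf u) * P.freq n (elementOf v) :=
  mul_le_mul (P.scheme_density_le u) (P.scheme_density_le v) ((P.scheme n).density_pos v).le
    (P.freq_pos _).le

theorem mean_sum_newLoad_inl_le (i : Fin k) :
    subsetMean (P.scheme n).density (fun X => ∑ u with (P.scheme n).part u = P.order (.inl i),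
        ((P.scheme n).newLoad u X : ℝ)) ≤
      Fintype.card H.edgeSet * (n : ℝ) ^ (1 + P.δ i) := by
  have hn : (0 : ℝ) < n := Nat.cast_pos.2 (NeZero.pos n)
  have hpart (u) : (P.scheme n).part u = P.order (.inl i) ↔ elementOf u = .inl i :=
    P.order.injective.eq_iff
  rw [subsetMean_sum, filter_congr fun u _ => hpart u]
  calc _ ≤ #{u : Candidate H n | elementOf u = .inl i} •
          (Fintype.card H.edgeSet * (n : ℝ) ^ P.δ i) := by
        refine sum_le_card_nsmul _ _ _ fun u hu => ?_
        obtain ⟨j, a⟩ | g := u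
        · obtain rfl : j = i := Sum.inl_injective (mem_filter.1 hu).2
          exact P.mean_newlyQueried_inl_le (fun u => ((P.scheme n).density_pos u).le)
            (fun u => ((P.scheme n).density_lt_one u).le) j a
            (fun _ _ _ => P.scheme_density_mul_density_le _ _)
            fun _ _ _ => P.scheme_density_mul_density_le _ _
        · cases (mem_filter.1 hu).2
    _ ≤ n • (Fintype.card H.edgeSet * (n : ℝ) ^ P.δ i) :=
        nsmul_le_nsmul_left (by positivity) (card_elementOf_eq_inl_le i)
    _ = _ := by rw [Real.rpow_add hn, Real.rpow_one, nsmul_eq_mul]; ring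

theorem mean_sum_newLoad_inr_le (e : H.edgeSet) :
    subsetMean (P.scheme n).density (fun X => ∑ u with (P.scheme n).part u = P.order (.inr e),
        ((P.scheme n).newLoad u X : ℝ)) ≤
      (n : ℝ) ^ (2 - P.x (.inl (edgeTail e)) - P.x (.inl (edgeHead e))) := by
  have hn : (0 : ℝ) < n := Nat.cast_pos.2 (NeZero.pos n)
  have hpart (u) : (P.scheme n).part u = P.order (.inr e) ↔ elementOf u = .inr e :=
    P.order.injective.eq_iff
  rw [subsetMean_sum, filter_congr fun u _ => hpart u]
  calc _ ≤ #{u : Candidate H n | elementOf u = .inr e} •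
          (P.freq n (.inl (edgeTail e)) * P.freq n (.inl (edgeHead e))) := by
        refine sum_le_card_nsmul _ _ _ fun u hu => ?_
        obtain p | ⟨e', p⟩ := u
        · cases (mem_filter.1 hu).2
        · obtain rfl : e' = e := Sum.inr_injective (mem_filter.1 hu).2
          exact (mean_newlyQueried_inr_le (fun u => ((P.scheme n).density_pos u).le)
            (fun u => ((P.scheme n).density_lt_one u).le) (e', p)).trans
              (P.scheme_density_mul_density_le _ _)
    _ ≤ (n * n) • (P.freq n (.inl (edgeTail e)) * P.freq n (.inl (edgeHead e))) :=
        nsmul_le_nsmul_left (mul_pos (P.freq_pos _) (P.freq_pos _)).le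
          (card_elementOf_eq_inr_le e)
    _ = (n : ℝ) ^ (1 + 1 + (-P.x (.inl (edgeTail e)) + -P.x (.inl (edgeHead e)))) := by
        simp only [Real.rpow_add hn, Real.rpow_one, nsmul_eq_mul, Nat.cast_mul, freq]
    _ = _ := by congr 1; ring

theorem mean_sum_newLoad_le (c : GraphElement H) :
    subsetMean (P.scheme n).density
        (fun X => ∑ u with (P.scheme n).part u = P.order c, ((P.scheme n).newLoad u X : ℝ)) ≤
      (Fintype.card H.edgeSet + 1) * (n : ℝ) ^ P.totalExp c := by
  have hpow : 0 < (n : ℝ) ^ P.totalExp c := Real.rpow_pos_of_pos (Nat.cast_pos.2 (NeZero.pos n)) _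
  obtain i | e := c
  · refine (P.mean_sum_newLoad_inl_le i).trans ?_
    exact mul_le_mul_of_nonneg_right (lt_add_one _).le hpow.le
  · refine (P.mean_sum_newLoad_inr_le e).trans ?_
    exact le_mul_of_one_le_left hpow.le (le_add_of_nonneg_left (Nat.cast_nonneg _))

theorem mean_newLoad_mark_inl_le (y : EdgeSlot n → Bool) (i : Fin k) :
    subsetMean ((P.scheme n).planted y (P.order (.inl i)))
        (fun X => ((P.scheme n).newLoad ((P.scheme n).mark y (P.order (.inl i))) X : ℝ)) ≤
      Fintype.card H.edgeSet * (n : ℝ) ^ P.δ i := by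
  have h₀ := (P.scheme n).planted_nonneg y (P.order (.inl i))
  have hpair (e : H.edgeSet) (hi : i ∈ e.1) (j : Fin k) (a : Fin n) (p : Fin n × Fin n)
      (hp : a = copyMap H y j → p = (copyMap H y (edgeTail e), copyMap H y (edgeHead e))) :
      (P.scheme n).planted y (P.order (.inl i)) (.inl (j, a)) *
          (P.scheme n).planted y (P.order (.inl i)) (.inr (e, p)) ≤
        P.freq n (.inl j) * P.freq n (.inr e) := by
    have hlt : P.order (.inl i) < P.order (.inr e) := P.order_inl_lt_order_inr hi
    by_cases ha : a = copyMap H y j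
    -- If `j` is planted, then `(j, a)` may be loaded with probability `1`; but the planting of the
    -- edge is still to come, so that its planted placement is absent.
    · rw [hp ha, P.scheme_planted_inr_eq_zero y (Fin.le_def.1 hlt.le), mul_zero]
      exact (mul_pos (P.freq_pos _) (P.freq_pos _)).le
    · refine mul_le_mul (P.scheme_planted_le fun hmark => absurd ?_ ha)
        (P.scheme_planted_le fun _ => Fin.le_def.1 hlt.le) (h₀ _) (P.freq_pos _).le
      exact (congr_arg Prod.snd (Sum.inl_injective hmark)).symm
  rw [P.scheme_mark_order]
  refine P.mean_newlyQueried_inl_le h₀ ((P.scheme n).planted_le_one y _) i _ ?_ ?_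
  · rintro e rfl a
    exact hpair e (by simp [← mk_edgeTail_edgeHead]) (edgeHead e) a _ fun ha => by rw [ha]
  · rintro e rfl a
    exact hpair e (by simp [← mk_edgeTail_edgeHead]) (edgeTail e) a _ fun ha => by rw [ha]

theorem mean_newLoad_mark_le (y : EdgeSlot n → Bool) (c : GraphElement H) :
    subsetMean ((P.scheme n).planted y (P.order c))
        (fun X => ((P.scheme n).newLoad ((P.scheme n).mark y (P.order c)) X : ℝ)) ≤
      (Fintype.card H.edgeSet + 1) * (n : ℝ) ^ P.markExp c := by
  have h₀ := (P.scheme n).planted_nonneg y (P.order c)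
  have h₁ := (P.scheme n).planted_le_one y (P.order c)
  obtain i | e := c
  · refine (P.mean_newLoad_mark_inl_le y i).trans (mul_le_mul_of_nonneg_right (lt_add_one _).le ?_)
    positivity
  · rw [P.scheme_mark_order]
    refine (mean_newlyQueried_inr_le h₀ h₁ _).trans ((mul_le_one₀ (h₁ _) (h₀ _) (h₁ _)).trans ?_)
    simp [markExp]

theorem totalLoad_mul_markLoad_le (C : ℝ) (c : GraphElement H) :
    C * (n : ℝ) ^ P.totalExp c * (C * (n : ℝ) ^ P.markExp c) ≤
      (2 ^ Fintype.card (GraphElement H) * C * (n : ℝ) ^ b) ^ 2 *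
        ∏ s with s < P.order c, (P.scheme n).q s := by
  have hn : (0 : ℝ) < n := Nat.cast_pos.2 (NeZero.pos n)
  have htwo : (1 : ℝ) ≤ 2 ^ Fintype.card (GraphElement H) := one_le_pow₀ one_le_two
  have hprod : 0 < ∏ s with s < P.order c, (P.scheme n).q s :=
    prod_pos fun s _ => (P.scheme n).q_pos s
  calc _ = C ^ 2 * (n : ℝ) ^ (P.totalExp c + P.markExp c) := by rw [Real.rpow_add hn]; ring
    _ ≤ C ^ 2 * (n : ℝ) ^ (b + b + -∑ s with s < P.order c, P.x (P.order.symm s)) :=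
        mul_le_mul_of_nonneg_left (Real.rpow_le_rpow_of_exponent_le
          (Nat.one_le_cast.2 NeZero.one_le) (P.totalExp_add_markExp_le c)) (sq_nonneg C)
    _ = (C * (n : ℝ) ^ b) ^ 2 * (n : ℝ) ^ (-∑ s with s < P.order c, P.x (P.order.symm s)) := by
        rw [Real.rpow_add hn, Real.rpow_add hn]; ring
    _ ≤ (C * (n : ℝ) ^ b) ^ 2 * (2 ^ Fintype.card (GraphElement H) *
          ∏ s with s < P.order c, (P.scheme n).q s) := by
        gcongr
        exact P.rpow_neg_sum_le_prod_freq c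
    _ ≤ (C * (n : ℝ) ^ b) ^ 2 * (2 ^ Fintype.card (GraphElement H) *
          ∏ s with s < P.order c, (P.scheme n).q s) * 2 ^ Fintype.card (GraphElement H) :=
        le_mul_of_one_le_right (by positivity) htwo
    _ = _ := by ring

end Scheme

theorem exists_learningGraph {k : ℕ} {H : SimpleGraph (Fin k)} [Fintype H.edgeSet] {b : ℝ}
    (P : LoadingPlan H b) : ∃ c : ℝ, 0 < c ∧ ∀ n : ℕ, 1 ≤ n →
      ∃ G : LearningGraph (Set.univ : Set (EdgeSlot n → Bool)) (subgraphFn H n),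
        G.complexity ≤ c * (n : ℝ) ^ b := by
  let T := Fintype.card (GraphElement H)
  let C : ℝ := Fintype.card H.edgeSet + 1
  have : 0 < C := by positivity
  refine ⟨(T + 1) * 2 ^ T * (2 ^ T * C), by positivity, fun n hn => ?_⟩
  have : NeZero n := ⟨by omega⟩
  have hinit (Q : Candidate H n → ℝ) (h₀ : ∀ u, 0 ≤ Q u) (h₁ : ∀ u, Q u ≤ 1)
      (hQ : ∀ u, Q u ≤ P.freq n (elementOf u)) :
      subsetMean Q (fun X => (#((P.scheme n).load X) : ℝ)) ≤ C * (n : ℝ) ^ b :=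
    (P.mean_queried_le h₀ h₁ hQ).trans
      (mul_le_mul_of_nonneg_right (lt_add_one _).le (by positivity))
  rw [mul_assoc]
  refine (P.scheme n).exists_complexity_le (α₀ := C * n ^ b) (β₀ := C * n ^ b)
    (α := fun s => C * n ^ P.totalExp (P.order.symm s))
    (β := fun s => C * n ^ P.markExp (P.order.symm s)) (by positivity) (by positivity)
    (fun s => by positivity) ?_ (fun s => ?_) (fun y _ _ => ?_) (fun y _ _ s => ?_) ?_ fun s => ?_
  · exact hinit _ (fun u => ((P.scheme n).density_pos u).le)
      (fun u => ((P.scheme n).density_lt_one u).le) P.scheme_density_le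
  · obtain ⟨c, rfl⟩ := P.order.surjective s
    rw [P.order.symm_apply_apply]
    exact P.mean_sum_newLoad_le c
  · exact hinit _ ((P.scheme n).planted_nonneg y 0) ((P.scheme n).planted_le_one y 0)
      fun u => P.scheme_planted_le fun _ => Nat.zero_le _
  · obtain ⟨c, rfl⟩ := P.order.surjective s
    rw [P.order.symm_apply_apply]
    exact P.mean_newLoad_mark_le y c
  · have htwo : (1 : ℝ) ≤ 2 ^ T := one_le_pow₀ one_le_two
    rw [← sq]
    gcongr
    exact le_mul_of_one_le_left (by positivity) htwo
  · obtain ⟨c, rfl⟩ := P.order.surjective s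
    rw [P.order.symm_apply_apply]
    exact P.totalLoad_mul_markLoad_le C c

end LoadingPlan

/-! ### The choice of exponents -/

section Vertex

variable {V : Type} [Fintype V] [DecidableEq V] {H : SimpleGraph V} [DecidableRel H.Adj]

theorem card_edgeSet_mem_eq_degree (v : V) : #{e : H.edgeSet | v ∈ e.1} = H.degree v := by
  rw [← H.card_incidenceFinset_eq_degree v, H.incidenceFinset_eq_filter, card_filter, card_filter]
  exact (sum_subtype H.edgeFinset (fun _ => H.mem_edgeFinset) fun e => if v ∈ e then 1 else 0).symm

theorem degree_add_card_edgeSet_notMem (v : V) :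
    H.degree v + #{e : H.edgeSet | v ∉ e.1} = #H.edgeFinset := by
  rw [← card_edgeSet_mem_eq_degree, card_filter_add_card_filter_not, card_univ,
    H.edgeFinset_card]

end Vertex

theorem edge_ends_cases {V : Type} {H : SimpleGraph V} {e : H.edgeSet} {i j : V}
    (he : e.1 = s(i, j)) (v : V) :
    i = v ∧ j ≠ v ∧ v ∈ e.1 ∨ i ≠ v ∧ j = v ∧ v ∈ e.1 ∨ i ≠ v ∧ j ≠ v ∧ v ∉ e.1 := by
  have hij : i ≠ j := H.ne_of_adj (by rw [← H.mem_edgeSet, ← he]; exact e.2)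
  rw [he, Sym2.mem_iff]
  grind

namespace LoadingPlan

section OfVertex

variable {V : Type} [Fintype V] [DecidableEq V] {H : SimpleGraph V} [Fintype H.edgeSet]

/-- The phases in which the elements of `H` are planted: first the vertices other than `v`, then
the edges avoiding `v`, then `v`, and finally the edges at `v`. -/
def vertexPhase (v : V) : GraphElement H → ℕ :=
  Sum.elim (fun i => if i = v then 2 else 0) fun e => if v ∈ e.1 then 3 else 1

/-- The exponents `κ` of the vertices other than `v`, `t` of the edges avoiding `v`, `1` of `v` and
`y` of the edges at `v`. -/
def vertexExp (v : V) (κ t y : ℝ) : GraphElement H → ℝ :=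
  Sum.elim (fun i => if i = v then 1 else κ) fun e => if v ∈ e.1 then y else t

theorem sum_vertexExp_phase_le (v : V) (κ t y : ℝ) (p : ℕ) :
    ∑ c : GraphElement H with vertexPhase v c ≤ p, vertexExp v κ t y c =
      (Fintype.card V - 1) * κ + (if 1 ≤ p then #{e : H.edgeSet | v ∉ e.1} * t else 0) +
        (if 2 ≤ p then 1 else 0) + if 3 ≤ p then #{e : H.edgeSet | v ∈ e.1} * y else 0 := by
  have hvertex (i : V) : (if vertexPhase (H := H) v (.inl i) ≤ p then
      vertexExp (H := H) v κ t y (.inl i) else 0) =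
      κ + if i = v then (if 2 ≤ p then 1 else 0) - κ else 0 := by
    by_cases h : i = v <;> simp [vertexPhase, vertexExp, h]
  have hedge (e : H.edgeSet) : (if vertexPhase v (.inr e) ≤ p then
      vertexExp v κ t y (.inr e) else 0) =
      if v ∈ e.1 then (if 3 ≤ p then y else 0) else if 1 ≤ p then t else 0 := by
    by_cases h : v ∈ e.1 <;> simp [vertexPhase, vertexExp, h]
  have hsplit (a b : ℝ) : ∑ e : H.edgeSet, (if v ∈ e.1 then a else b) =
      #{e : H.edgeSet | v ∈ e.1} * a + #{e : H.edgeSet | v ∉ e.1} * b := by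
    simp [sum_ite]
  simp only [sum_filter, Fintype.sum_sum_type, hvertex, hedge, hsplit, sum_add_distrib,
    sum_ite_eq', sum_const, mem_univ, if_true, card_univ, nsmul_eq_mul, mul_ite, mul_zero]
  ring

theorem nonempty_of_vertex {κ t y : ℝ} (v : V) (hdeg : 1 ≤ #{e : H.edgeSet | v ∈ e.1})
    (hκ : Fintype.card V * κ = 1) (hy : (#{e : H.edgeSet | v ∈ e.1} + 1) * y = 1 - κ)
    (ht : (#{e : H.edgeSet | v ∉ e.1} + 2) * t = 2 * y - κ) (ht₀ : 0 ≤ t) :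
    Nonempty (LoadingPlan H (2 - 2 * κ - t)) := by
  have hcard : (1 : ℝ) ≤ Fintype.card V := Nat.one_le_cast.2 (Fintype.card_pos_iff.2 ⟨v⟩)
  have hdeg' : (1 : ℝ) ≤ #{e : H.edgeSet | v ∈ e.1} := Nat.one_le_cast.2 hdeg
  have hD : (0 : ℝ) ≤ #{e : H.edgeSet | v ∉ e.1} * t := by positivity
  have hκ₀ : 0 ≤ κ := by nlinarith only [hcard, hκ]
  have hκ₁ : κ ≤ 1 := by nlinarith only [hcard, hκ, hκ₀]
  have hy₀ : 0 ≤ y := by nlinarith only [hdeg', hy, hκ₁]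
  have hy₁ : 2 * y ≤ 1 - κ := by nlinarith only [hdeg', hy, hy₀]
  exact ⟨{
    x := vertexExp v κ t y
    x_nonneg := by
      rintro (i | e) <;> simp only [vertexExp, Sum.elim_inl, Sum.elim_inr] <;>
        split_ifs <;> first | assumption | exact zero_le_one
    phase := vertexPhase v
    phase_lt := fun e i hi => by
      by_cases h : i = v
      · subst h; simp [vertexPhase, hi]
      · by_cases hv : v ∈ e.1 <;> simp [vertexPhase, h, hv]
    δ := fun i => if i = v then 1 - κ - y else 1 - κ - t
    initial_le := fun e i j he => by
      obtain ⟨hi, hj, hv⟩ | ⟨hi, hj, hv⟩ | ⟨hi, hj, hv⟩ := edge_ends_cases he v <;>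
        simp only [vertexExp, Sum.elim_inl, Sum.elim_inr, hi, hj, hv, if_true, if_false] <;>
          linarith
    degree_le := fun e i j he => by
      obtain ⟨hi, hj, hv⟩ | ⟨hi, hj, hv⟩ | ⟨hi, hj, hv⟩ := edge_ends_cases he v <;>
        simp only [vertexExp, Sum.elim_inl, Sum.elim_inr, hi, hj, hv, if_true, if_false] <;>
          linarith
    vertex_le := fun i => by
      rw [sum_vertexExp_phase_le]
      by_cases h : i = v <;> simp [vertexPhase, vertexExp, h] <;> linarith
    edge_le := fun e i j he => by
      rw [sum_vertexExp_phase_le]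
      obtain ⟨hi, hj, hv⟩ | ⟨hi, hj, hv⟩ | ⟨hi, hj, hv⟩ := edge_ends_cases he v <;>
        simp [vertexPhase, vertexExp, hi, hj, hv] <;> linarith }⟩

end OfVertex

end LoadingPlan

theorem subgraph_learningGraph_minDegree_general {k m d : ℕ} (H : SimpleGraph (Fin k))
    [DecidableRel H.Adj] (hm : #H.edgeFinset = m) (v : Fin k) (hd : H.degree v = d)
    (hd1 : 1 ≤ d) :
    ∃ c : ℝ, 0 < c ∧ ∀ n : ℕ, 1 ≤ n →
      ∃ G : LearningGraph (Set.univ : Set (EdgeSlot n → Bool)) (subgraphFn H n),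
        G.complexity ≤
          c * (n : ℝ) ^ ((2 : ℝ) - 2 / k -
            (2 * k - d - 3) / (k * (d + 1) * ((m : ℝ) - d + 2))) := by
  have hin : #{e : H.edgeSet | v ∈ e.1} = d := (card_edgeSet_mem_eq_degree v).trans hd
  have hmD : (m : ℝ) - d = #{e : H.edgeSet | v ∉ e.1} := by
    rw [sub_eq_iff_eq_add', ← Nat.cast_add, ← hm, ← hd, degree_add_card_edgeSet_notMem]
  have hdk : (d : ℝ) + 1 ≤ k := by
    exact_mod_cast hd ▸ (H.degree_lt_card_verts v).trans_eq (Fintype.card_fin k)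
  have hd' : (1 : ℝ) ≤ d := Nat.one_le_cast.2 hd1
  have hk : (k : ℝ) ≠ 0 := by linarith
  have hd₀ : (d : ℝ) + 1 ≠ 0 := by linarith
  rw [hmD]
  obtain ⟨P⟩ := LoadingPlan.nonempty_of_vertex (κ := 1 / k) (y := (k - 1) / (k * (d + 1)))
    (t := (2 * k - d - 3) / (k * (d + 1) * (#{e : H.edgeSet | v ∉ e.1} + 2))) v
    (hd1.trans_eq hin.symm) (by field_simp; simp) (by rw [hin]; field_simp)
    (by field_simp; ring) (div_nonneg (by linarith) (by positivity))
  simpa only [mul_one_div] using P.exists_learningGraph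

end

/-- **Theorem 2 of the paper.** For a fixed graph `H` on `k ≥ 3` vertices with `m` edges and
minimum degree `d ≥ 1`, there is a learning graph for the subgraph-detection function
`f_{H,n}` of complexity `O(n^{2 - 2/k - (2k-d-3)/(k(d+1)(m-d+2))})`. -/
theorem subgraph_learningGraph_minDegree (k m d : ℕ) (hk : 3 ≤ k)
    (H : SimpleGraph (Fin k)) [DecidableRel H.Adj]
    (hm : H.edgeFinset.card = m) (hd : H.minDegree = d) (hd1 : 1 ≤ d) :
    ∃ c : ℝ, 0 < c ∧ ∀ n : ℕ, 1 ≤ n →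
      ∃ G : LearningGraph (Set.univ : Set (EdgeSlot n → Bool)) (subgraphFn H n),
        G.complexity ≤
          c * (n : ℝ) ^ ((2 : ℝ) - 2 / k -
            (2 * k - d - 3) / (k * (d + 1) * ((m : ℝ) - d + 2))) := by
  have : Nonempty (Fin k) := ⟨⟨0, by omega⟩⟩
  obtain ⟨v, hv⟩ := H.exists_minimal_degree_vertex
  exact subgraph_learningGraph_minDegree_general H hm v (hv.symm.trans hd) hd1
end
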